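/- With probability 1, there are infinitely many times t at which the simple random walk on ℤ has exactly three favorite sites, i.e. almost surely the set {t ∈ ℕ : #𝒦(t) = 3} is infinite. -/

import Mathlib

open MeasureTheory ProbabilityTheory

open scoped ENNReal

/-!
The occupation of each site is followed through the numbers of steps that leave it in either
direction. A path with prescribed numbers of departures can be built from the stacks of exits of the
individual sites, so its probability is an explicit product of one factor per site.

Fix the occupation left behind by any finite past, and consider the continuations that end in the
middle of three consecutive sites at a common height `h` above all other sites. When `h` exceeds the
present maximum by `r`, the expected number of such continuations is `O(1 / r)`: moving the numbers
of crossings of two edges near the end of the path spreads the mass of each continuation over a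
family of about `r` members of a class of paths that still has bounded total mass. Once `h` is large
it is also at least `c / h` with a universal `c`: away from the end, the product formula describes
critical geometric branching processes, with immigration between the two ends of the path, and
these stay below the level `h` and die out with the right probability.

Summing over a window of heights, the first and second moments of the number of such triples are
comparable, as both are governed by harmonic sums. Hence from every past a new triple occurs at some
height in the window with probability bounded below uniformly, so almost surely they occur at
arbitrarily large heights.
-/

namespace FavoriteSites

/-! ### Words and their mass -/

/-- The increment of the walk encoded by a letter. -/
def step (c : Bool) : ℤ := if c then 1 else -1

/-- The probability that simple random walk starts with the steps of `w`. -/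
noncomputable def weight (w : List Bool) : ℝ≥0∞ := 2⁻¹ ^ w.length

/-- The expected number of prefixes in `P` of an infinite sequence of fair coin flips. It is a
probability as soon as no word of `P` is a prefix of another one. -/
noncomputable def mass (P : Set (List Bool)) : ℝ≥0∞ := ∑' w : P, weight w

theorem weight_append (v w : List Bool) : weight (v ++ w) = weight v * weight w := by
  simp [weight, pow_add]

theorem mass_mono {P Q : Set (List Bool)} (h : P ⊆ Q) : mass P ≤ mass Q :=
  ENNReal.tsum_mono_subtype weight h

@[simp]
theorem mass_empty : mass ∅ = 0 := by simp [mass]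

theorem mass_preimage_eq_tsum {α : Type*} (f : List Bool → α) (A : Set α) :
    mass (f ⁻¹' A) = ∑' x : A, mass (f ⁻¹' {↑x}) := by
  have hA : f ⁻¹' A = ⋃ x ∈ A, f ⁻¹' {x} := by ext; simp
  unfold mass
  rw [hA]
  exact ENNReal.tsum_biUnion' (Set.pairwiseDisjoint_fiber f A)

theorem mass_image_append (w : List Bool) (P : Set (List Bool)) :
    mass ((w ++ ·) '' P) = weight w * mass P := by
  rw [mass, tsum_image weight (List.append_right_injective w).injOn]
  simp only [weight_append, ENNReal.tsum_mul_left, mass]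

open Classical in
theorem mass_eq_cons (P : Set (List Bool)) :
    mass P = (if [] ∈ P then 1 else 0) +
      (2⁻¹ * mass {w | true :: w ∈ P} + 2⁻¹ * mass {w | false :: w ∈ P}) := by
  have hP : P = {w ∈ P | w = []} ∪
      (([true] ++ ·) '' {w | true :: w ∈ P} ∪ ([false] ++ ·) '' {w | false :: w ∈ P}) := by
    ext (_ | ⟨_ | _, w⟩) <;> simp
  have hcons : Disjoint (([true] ++ ·) '' {w | true :: w ∈ P})
      (([false] ++ ·) '' {w | false :: w ∈ P}) := by
    simp [Set.disjoint_left]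
  have hnil : Disjoint {w ∈ P | w = []}
      (([true] ++ ·) '' {w | true :: w ∈ P} ∪ ([false] ++ ·) '' {w | false :: w ∈ P}) := by
    simp +contextual [Set.disjoint_left]
  have hmass : mass {w ∈ P | w = []} = if [] ∈ P then 1 else 0 := by
    split_ifs with h
    · rw [show {w ∈ P | w = []} = {[]} by ext; simp +contextual [h]]
      simp [mass, weight]
    · rw [show {w ∈ P | w = []} = ∅ by ext; simp; grind, mass_empty]
  have htsum := fun {s t : Set (List Bool)} (h : Disjoint s t) ↦
    Summable.tsum_union_disjoint (f := weight) h ENNReal.summable ENNReal.summable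
  nth_rw 1 [hP]
  rw [mass, htsum hnil, htsum hcons, ← mass, ← mass, ← mass, hmass, mass_image_append,
    mass_image_append]
  simp [weight]

theorem uniquelyDecodable_of_isAntichain {P : Set (List Bool)} (hP : IsAntichain (· <+: ·) P)
    (hnil : [] ∉ P) : InformationTheory.UniquelyDecodable P := by
  intro L₁
  induction L₁ with
  | nil =>
    rintro (_ | ⟨w, L₂⟩) - h₂ h
    · rfl
    · simp_all
  | cons v L₁ ih =>
    rintro (_ | ⟨w, L₂⟩) h₁ h₂ h
    · simp_all
    · simp only [List.mem_cons, forall_eq_or_imp, List.flatten_cons] at h₁ h₂ h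
      obtain rfl : v = w := by
        rcases List.prefix_or_prefix_of_prefix (List.prefix_append v L₁.flatten)
          (h ▸ List.prefix_append w L₂.flatten) with hvw | hwv
        · exact hP.eq h₁.1 h₂.1 hvw
        · exact (hP.eq h₂.1 h₁.1 hwv).symm
      rw [ih L₂ h₁.2 h₂.2 (List.append_cancel_left h)]

theorem mass_le_one_of_isAntichain {P : Set (List Bool)} (hP : IsAntichain (· <+: ·) P) :
    mass P ≤ 1 := by
  by_cases hnil : [] ∈ P
  · obtain rfl : P = {[]} := Set.eq_singleton_iff_unique_mem.2
      ⟨hnil, fun w hw ↦ (hP.eq hnil hw List.nil_prefix).symm⟩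
    simp [mass, weight]
  rw [mass, tsum_subtype P weight, ENNReal.tsum_eq_iSup_sum]
  refine iSup_le fun F ↦ ?_
  classical
  have hdec : InformationTheory.UniquelyDecodable ({w ∈ F | w ∈ P} : Finset (List Bool)) :=
    uniquelyDecodable_of_isAntichain (hP.subset (by simp [Set.subset_def])) (by simp [hnil])
  have hkraft := InformationTheory.kraft_mcmillan_inequality hdec
  calc ∑ w ∈ F, P.indicator weight w = ∑ w ∈ F with w ∈ P, weight w := by
        rw [Finset.sum_indicator_eq_sum_filter]
    _ = ENNReal.ofReal (∑ w ∈ F with w ∈ P, (1 / Fintype.card Bool : ℝ) ^ w.length) := by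
        rw [ENNReal.ofReal_sum_of_nonneg fun _ _ ↦ by positivity]
        simp [weight, ENNReal.ofReal_pow, ENNReal.ofReal_inv_of_pos, ENNReal.inv_pow]
    _ ≤ 1 := ENNReal.ofReal_le_one.2 hkraft

/-! ### Departure profiles -/

/-- The final position of a path, together with the number of steps which it takes down,
respectively up, from each site. -/
@[ext]
structure Profile where
  endpoint : ℤ
  down : ℤ → ℕ
  up : ℤ → ℕ

namespace Profile

/-- The profile of a path preceded by the step `c` taken from `s`. -/
def cons (p : Profile) (s : ℤ) (c : Bool) : Profile where
  endpoint := p.endpoint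
  down := p.down + if c then 0 else Pi.single s 1
  up := p.up + if c then Pi.single s 1 else 0

/-- The inverse of `Profile.cons`; the subtraction is truncated. -/
def uncons (p : Profile) (s : ℤ) (c : Bool) : Profile where
  endpoint := p.endpoint
  down := p.down - if c then 0 else Pi.single s 1
  up := p.up - if c then Pi.single s 1 else 0

/-- The number of arrivals at `z`. In the profile of a path this is the number of its visits to
`z`, the starting point not being counted. -/
def visits (p : Profile) (z : ℤ) : ℕ := p.up (z - 1) + p.down (z + 1)

/-- The flow equations satisfied by the profile of a path from `s`: across each edge, the up and
down steps alternate. -/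
def IsFlow (s : ℤ) (p : Profile) : Prop :=
  ∀ z, p.down (z + 1) + (if s ≤ z ∧ z < p.endpoint then 1 else 0) =
    p.up z + if p.endpoint ≤ z ∧ z < s then 1 else 0

end Profile

/-- The profile of the path from `s` with the steps `w`. -/
def profile : ℤ → List Bool → Profile
  | s, [] => ⟨s, 0, 0⟩
  | s, c :: w => (profile (s + step c) w).cons s c

theorem endpoint_profile_append (s : ℤ) (v w : List Bool) :
    (profile s (v ++ w)).endpoint = (profile (profile s v).endpoint w).endpoint := by
  induction v generalizing s with
  | nil => rfl
  | cons c _ ih => exact ih _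

theorem visits_profile_cons (s : ℤ) (c : Bool) (w : List Bool) :
    (profile s (c :: w)).visits =
      Pi.single (s + step c) 1 + (profile (s + step c) w).visits := by
  ext z
  cases c <;> simp [profile, Profile.visits, Profile.cons, step, Pi.single_apply] <;> grind

theorem visits_profile_append (s : ℤ) (v w : List Bool) :
    (profile s (v ++ w)).visits =
      (profile s v).visits + (profile (profile s v).endpoint w).visits := by
  induction v generalizing s with
  | nil => ext z; simp [profile, Profile.visits]
  | cons c v ih =>
    rw [List.cons_append, visits_profile_cons, ih, visits_profile_cons, add_assoc]
    rfl

theorem visits_profile_endpoint_pos (s : ℤ) {w : List Bool} (hw : w ≠ []) :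
    0 < (profile s w).visits (profile s w).endpoint := by
  obtain ⟨_, _, rfl⟩ := List.eq_nil_or_concat' w |>.resolve_left hw
  rw [visits_profile_append, endpoint_profile_append, visits_profile_cons]
  simp [profile, Profile.cons]

theorem visits_profile_le_length (s : ℤ) (w : List Bool) (z : ℤ) :
    (profile s w).visits z ≤ w.length := by
  induction w generalizing s with
  | nil => simp [profile, Profile.visits]
  | cons c w ih =>
    have := ih (s + step c)
    simp only [visits_profile_cons, Pi.add_apply, Pi.single_apply, List.length_cons]
    split_ifs <;> omega

theorem isFlow_profile (s : ℤ) (w : List Bool) : (profile s w).IsFlow s := by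
  induction w generalizing s with
  | nil => exact fun z ↦ rfl
  | cons c w ih =>
    intro z
    have h := ih (s + step c) z
    cases c <;> simp [profile, Profile.cons, step, Pi.single_apply] at h ⊢ <;> grind

theorem finite_support_profile (s : ℤ) (w : List Bool) :
    ∃ J : Finset ℤ, ∀ z ∉ J, (profile s w).down z = 0 ∧ (profile s w).up z = 0 := by
  induction w generalizing s with
  | nil => exact ⟨∅, by simp [profile]⟩
  | cons c w ih =>
    obtain ⟨J, hJ⟩ := ih (s + step c)
    refine ⟨insert s J, fun z hz ↦ ?_⟩
    simp only [Finset.mem_insert, not_or] at hz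
    have hJz := hJ z hz.2
    cases c <;> simp [profile, Profile.cons, hJz, hz.1]

/-! ### The product formula for profiles -/

section ProductFormula

/-- The probability that the steps from `s` form a path with profile `p`. -/
noncomputable def pathMass (s : ℤ) (p : Profile) : ℝ≥0∞ := mass (profile s ⁻¹' {p})

/-- The number of orders in which `A` down steps and `B` up steps can leave the site `z` on a path
ending at `y`: for `z ≠ y` the last departure is towards `y`. -/
def arrangements (y z : ℤ) (A B : ℕ) : ℕ :=
  if y < z then (A + B - 1).choose B else if z < y then (A + B - 1).choose A else (A + B).choose A

/-- The contribution of the site `z` to the probability of a profile with final position `y`. -/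
noncomputable def siteWeight (y z : ℤ) (A B : ℕ) : ℝ≥0∞ := 2⁻¹ ^ (A + B) * arrangements y z A B

theorem siteWeight_of_lt {y z : ℤ} (h : y < z) (A B : ℕ) :
    siteWeight y z A B = 2⁻¹ ^ (A + B) * (A + B - 1).choose B := by
  rw [siteWeight, arrangements, if_pos h]

theorem siteWeight_of_gt {y z : ℤ} (h : z < y) (A B : ℕ) :
    siteWeight y z A B = 2⁻¹ ^ (A + B) * (A + B - 1).choose A := by
  rw [siteWeight, arrangements, if_neg h.not_gt, if_pos h]

theorem siteWeight_self (y : ℤ) (A B : ℕ) :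
    siteWeight y y A B = 2⁻¹ ^ (A + B) * (A + B).choose A := by
  rw [siteWeight, arrangements, if_neg (lt_irrefl y), if_neg (lt_irrefl y)]

@[simp]
theorem siteWeight_zero_zero (y z : ℤ) : siteWeight y z 0 0 = 1 := by
  simp [siteWeight, arrangements]

theorem siteWeight_zero_down {y z : ℤ} (h : y < z) {B : ℕ} (hB : B ≠ 0) :
    siteWeight y z 0 B = 0 := by
  rw [siteWeight_of_lt h, Nat.choose_eq_zero_of_lt (by lia), Nat.cast_zero, mul_zero]

theorem siteWeight_zero_up {y z : ℤ} (h : z < y) {A : ℕ} (hA : A ≠ 0) :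
    siteWeight y z A 0 = 0 := by
  rw [siteWeight_of_gt h, Nat.choose_eq_zero_of_lt (by lia), Nat.cast_zero, mul_zero]

theorem arrangements_eq_first_departure {y z : ℤ} {A B : ℕ} (hlt : y < z → 0 < A)
    (hgt : z < y → 0 < B) (hAB : 0 < A + B) :
    arrangements y z A B = (if 0 < B then arrangements y z A (B - 1) else 0) +
      if 0 < A then arrangements y z (A - 1) B else 0 := by
  have pascal (A B k : ℕ) : (A + 1 + B).choose (k + 1) = (A + B).choose k +
      (A + B).choose (k + 1) := by rw [add_right_comm, Nat.choose_succ_succ]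
  rcases A with _ | A <;> rcases B with _ | B <;> unfold arrangements <;> split_ifs <;>
    grind [Nat.choose_self]

theorem siteWeight_eq_first_departure {y z : ℤ} {A B : ℕ} (hlt : y < z → 0 < A)
    (hgt : z < y → 0 < B) (hAB : 0 < A + B) :
    siteWeight y z A B = (if 0 < B then 2⁻¹ * siteWeight y z A (B - 1) else 0) +
      if 0 < A then 2⁻¹ * siteWeight y z (A - 1) B else 0 := by
  simp only [siteWeight]
  rw [arrangements_eq_first_departure hlt hgt hAB]
  rcases A with _ | A <;> rcases B with _ | B <;> simp at hAB ⊢ <;> ring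

namespace Profile

variable {p : Profile} {s : ℤ}

theorem cons_eq_iff_up {q : Profile} : q.cons s true = p ↔ 0 < p.up s ∧ q = p.uncons s true := by
  simp only [Profile.ext_iff, cons, uncons, funext_iff, Pi.add_apply, Pi.sub_apply,
    Pi.single_apply, if_true, Pi.zero_apply]
  grind

theorem cons_eq_iff_down {q : Profile} :
    q.cons s false = p ↔ 0 < p.down s ∧ q = p.uncons s false := by
  simp only [Profile.ext_iff, cons, uncons, funext_iff, Pi.add_apply, Pi.sub_apply,
    Pi.single_apply, Bool.false_eq_true, if_false, Pi.zero_apply]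
  grind

theorem sum_uncons_up_lt {J : Finset ℤ} (hs : s ∈ J) (h : 0 < p.up s) :
    ∑ z ∈ J, ((p.uncons s true).down z + (p.uncons s true).up z) <
      ∑ z ∈ J, (p.down z + p.up z) :=
  Finset.sum_lt_sum (by simp [uncons]) ⟨s, hs, by simpa [uncons] using h⟩

theorem sum_uncons_down_lt {J : Finset ℤ} (hs : s ∈ J) (h : 0 < p.down s) :
    ∑ z ∈ J, ((p.uncons s false).down z + (p.uncons s false).up z) <
      ∑ z ∈ J, (p.down z + p.up z) :=
  Finset.sum_lt_sum (by simp [uncons]) ⟨s, hs, by simpa [uncons] using h⟩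

theorem IsFlow.uncons_up (hp : p.IsFlow s) (h : 0 < p.up s) :
    (p.uncons s true).IsFlow (s + 1) := by
  intro z
  have := hp z
  simp [uncons, Pi.single_apply]
  grind

theorem IsFlow.uncons_down (hp : p.IsFlow s) (h : 0 < p.down s) :
    (p.uncons s false).IsFlow (s - 1) := by
  intro z
  have := hp z
  simp [uncons, Pi.single_apply]
  grind

theorem IsFlow.down_pos (hp : p.IsFlow s) (h : p.endpoint < s) : 0 < p.down s := by
  have := hp (s - 1)
  grind

theorem IsFlow.up_pos (hp : p.IsFlow s) (h : s < p.endpoint) : 0 < p.up s := by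
  have := hp s
  grind

theorem IsFlow.down_add_one {p : Profile} (hp : p.IsFlow p.endpoint) (z : ℤ) :
    p.down (z + 1) = p.up z := by
  have := hp z
  grind

/-- The last departure from a site is towards `p.endpoint`, so emptiness propagates outwards. -/
theorem IsFlow.eq_of_siteWeight_ne_zero {p : Profile} (hp : p.IsFlow p.endpoint)
    (hdown : p.down p.endpoint = 0) (hup : p.up p.endpoint = 0)
    (hne : ∀ z, siteWeight p.endpoint z (p.down z) (p.up z) ≠ 0) : p = ⟨p.endpoint, 0, 0⟩ := by
  have hright (z : ℤ) (hz : p.endpoint ≤ z) : p.up z = 0 := by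
    induction z, hz using Int.leInduction with
    | base => exact hup
    | succ z hz ih =>
      by_contra h
      refine hne (z + 1) ?_
      rw [hp.down_add_one, ih, siteWeight_zero_down (by lia) h]
  have hleft (z : ℤ) (hz : z ≤ p.endpoint) : p.down z = 0 := by
    induction z, hz using Int.leInductionDown with
    | base => exact hdown
    | pred z hz ih =>
      by_contra h
      refine hne (z - 1) ?_
      rw [← hp.down_add_one, sub_add_cancel, ih, siteWeight_zero_up (by lia) h]
  ext z
  · rfl
  · rcases le_total z p.endpoint with hz | hz
    · exact hleft z hz
    · obtain rfl | hz := hz.eq_or_lt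
      · exact hdown
      · simpa [hright (z - 1) (by lia)] using hp.down_add_one (z - 1)
  · rcases le_or_gt p.endpoint z with hz | hz
    · exact hright z hz
    · rw [← hp.down_add_one, hleft (z + 1) (by lia)]
      rfl

end Profile

open Profile

open Classical in
theorem pathMass_eq_first_step (s : ℤ) (p : Profile) :
    pathMass s p = (if p = ⟨s, 0, 0⟩ then 1 else 0) +
      ((if 0 < p.up s then 2⁻¹ * pathMass (s + 1) (p.uncons s true) else 0) +
        if 0 < p.down s then 2⁻¹ * pathMass (s - 1) (p.uncons s false) else 0) := by
  have hup : mass {w | true :: w ∈ profile s ⁻¹' {p}} =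
      if 0 < p.up s then pathMass (s + 1) (p.uncons s true) else 0 := by
    split_ifs with h <;> simp [h, pathMass, profile, step, cons_eq_iff_up, Set.preimage]
  have hdown : mass {w | false :: w ∈ profile s ⁻¹' {p}} =
      if 0 < p.down s then pathMass (s - 1) (p.uncons s false) else 0 := by
    split_ifs with h <;>
      simp [h, pathMass, profile, step, cons_eq_iff_down, Set.preimage, ← sub_eq_add_neg]
  rw [pathMass, mass_eq_cons, hup, hdown, mul_ite, mul_ite, mul_zero]
  simp only [Set.mem_preimage, Set.mem_singleton_iff, profile, eq_comm]

theorem prod_siteWeight_eq_first_step {J : Finset ℤ} {s : ℤ} (hs : s ∈ J) {p : Profile}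
    (hlt : p.endpoint < s → 0 < p.down s) (hgt : s < p.endpoint → 0 < p.up s)
    (hpos : 0 < p.down s + p.up s) :
    ∏ z ∈ J, siteWeight p.endpoint z (p.down z) (p.up z) =
      (if 0 < p.up s then 2⁻¹ * ∏ z ∈ J, siteWeight p.endpoint z ((p.uncons s true).down z)
        ((p.uncons s true).up z) else 0) +
      if 0 < p.down s then 2⁻¹ * ∏ z ∈ J, siteWeight p.endpoint z ((p.uncons s false).down z)
        ((p.uncons s false).up z) else 0 := by
  have hprod (c : Bool) : ∏ z ∈ J, siteWeight p.endpoint z ((p.uncons s c).down z)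
      ((p.uncons s c).up z) =
      siteWeight p.endpoint s ((p.uncons s c).down s) ((p.uncons s c).up s) *
        ∏ z ∈ J.erase s, siteWeight p.endpoint z (p.down z) (p.up z) := by
    rw [← Finset.mul_prod_erase _ _ hs]
    congr 1
    refine Finset.prod_congr rfl fun z hz ↦ ?_
    cases c <;> simp [uncons, Finset.ne_of_mem_erase hz]
  rw [hprod, hprod, ← Finset.mul_prod_erase _ _ hs, siteWeight_eq_first_departure hlt hgt hpos]
  simp [uncons, add_mul, ite_mul, mul_assoc]

theorem pathMass_eq_prod_of_zero {s : ℤ} {p : Profile} (hp : p.IsFlow s) {J : Finset ℤ}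
    (hJ : ∀ z ∉ J, p.down z = 0 ∧ p.up z = 0) (hdown : p.down s = 0) (hup : p.up s = 0) :
    pathMass s p = ∏ z ∈ J, siteWeight p.endpoint z (p.down z) (p.up z) := by
  obtain rfl : p.endpoint = s := by
    have := hp.down_pos
    have := hp.up_pos
    grind
  rw [pathMass_eq_first_step, if_neg hdown.not_gt, if_neg hup.not_gt, add_zero, add_zero]
  split_ifs with h
  · rw [h]
    simp
  · by_contra hprod
    refine h (hp.eq_of_siteWeight_ne_zero hdown hup fun z ↦ ?_)
    by_cases hz : z ∈ J
    · exact Finset.prod_ne_zero_iff.1 (Ne.symm hprod) z hz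
    · simp [hJ z hz]

theorem pathMass_eq_prod {s : ℤ} {p : Profile} (hp : p.IsFlow s) {J : Finset ℤ}
    (hJ : ∀ z ∉ J, p.down z = 0 ∧ p.up z = 0) :
    pathMass s p = ∏ z ∈ J, siteWeight p.endpoint z (p.down z) (p.up z) := by
  induction hn : ∑ z ∈ J, (p.down z + p.up z) using Nat.strong_induction_on generalizing s p with
  | _ n ih =>
  by_cases hs : 0 < p.down s + p.up s
  · have hne : p ≠ ⟨s, 0, 0⟩ := by
      rintro rfl
      simp at hs
    have huncons (c : Bool) (z : ℤ) (hz : z ∉ J) :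
        (p.uncons s c).down z = 0 ∧ (p.uncons s c).up z = 0 := by simp [uncons, hJ z hz]
    have hsJ : s ∈ J := by grind
    rw [pathMass_eq_first_step, if_neg hne, zero_add,
      prod_siteWeight_eq_first_step hsJ hp.down_pos hp.up_pos hs]
    congr 1 <;> split_ifs with h
    · rw [ih _ (hn ▸ sum_uncons_up_lt hsJ h) (hp.uncons_up h) (huncons true) rfl]
      rfl
    · rfl
    · rw [ih _ (hn ▸ sum_uncons_down_lt hsJ h) (hp.uncons_down h) (huncons false) rfl]
      rfl
    · rfl
  · rw [Nat.not_lt, Nat.le_zero, add_eq_zero] at hs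
    exact pathMass_eq_prod_of_zero hp hJ hs.1 hs.2

theorem exists_isFlow_of_pathMass_ne_zero {s : ℤ} {p : Profile} (h : pathMass s p ≠ 0) :
    p.IsFlow s ∧ ∃ J : Finset ℤ, ∀ z ∉ J, p.down z = 0 ∧ p.up z = 0 := by
  obtain ⟨w, rfl⟩ : ∃ w, profile s w = p := by
    by_contra! hw
    refine h ?_
    rw [pathMass, show profile s ⁻¹' {p} = ∅ from Set.eq_empty_of_forall_notMem hw, mass_empty]
  exact ⟨isFlow_profile s w, finite_support_profile s w⟩

end ProductFormula

/-! ### Crossings of an edge at distance one from the endpoint -/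

section Edge

theorem half_le_of_one_sub_mul_le {f : ℕ → ℝ} {J : ℕ} {x : ℝ} (hx0 : 0 ≤ x) (hx : J * x ≤ 1 / 2)
    (h0 : 0 ≤ f 0) (hf : ∀ k < J, (1 - x) * f k ≤ f (k + 1)) {j : ℕ} (hj : j ≤ J) :
    f 0 / 2 ≤ f j := by
  rcases J.eq_zero_or_pos with rfl | hJ
  · rw [Nat.le_zero.1 hj]
    linarith
  have hx1 : 1 * x ≤ J * x := by gcongr; exact_mod_cast hJ
  have hjx : (j : ℝ) * x ≤ J * x := by gcongr
  have bernoulli : 1 + j * (-x) ≤ (1 - x) ^ j := one_add_mul_le_pow (by linarith) j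
  calc f 0 / 2 = 1 / 2 * f 0 := by ring
    _ ≤ (1 - x) ^ j * f 0 := by gcongr; linarith
    _ ≤ f j := geom_le (by linarith) j fun k hk ↦ hf k (hk.trans_le hj)

/-- The dependence on `v` of the joint contribution of the two sites nearest to the endpoint on one
side of it, when the edge between them is crossed `v` times outwards and `v + e` times inwards,
the inner site is left `A` times inwards and the outer one `B` times outwards. -/
noncomputable def edgeWeight (A B e v : ℕ) : ℝ :=
  (A + v - 1).choose v * (v + e + B - 1).choose B * (1 / 4) ^ v

variable {A B e u v J : ℕ}

theorem edgeWeight_nonneg : 0 ≤ edgeWeight A B e v := by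
  unfold edgeWeight
  positivity

theorem add_one_mul_choose_add_sub_one (hA : 1 ≤ A) (v : ℕ) :
    (v + 1) * (A + v).choose (v + 1) = (A + v) * (A + v - 1).choose v := by
  obtain ⟨A, rfl⟩ := Nat.exists_eq_add_of_le' hA
  have := Nat.add_one_mul_choose_eq (A + v) v
  grind

theorem mul_choose_add (n B : ℕ) :
    n * (n + B).choose B = (n + B) * (n + B - 1).choose B := by
  rcases n.eq_zero_or_pos with rfl | hn
  · rcases B.eq_zero_or_pos with rfl | hB
    · simp
    · simp [Nat.choose_eq_zero_of_lt (show B - 1 < B by lia)]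
  · obtain ⟨n, rfl⟩ := Nat.exists_eq_add_of_le' hn
    have := Nat.choose_mul_succ_eq (n + B) B
    grind

theorem edgeWeight_succ (hA : 1 ≤ A) :
    4 * (v + 1) * (v + e) * edgeWeight A B e (v + 1) =
      (A + v) * (v + e + B) * edgeWeight A B e v := by
  have h1 : ((v : ℝ) + 1) * (A + v).choose (v + 1) = (A + v) * (A + v - 1).choose v := by
    exact_mod_cast add_one_mul_choose_add_sub_one hA v
  have h2 : ((v : ℝ) + e) * (v + e + B).choose B = (v + e + B) * (v + e + B - 1).choose B := by
    exact_mod_cast mul_choose_add (v + e) B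
  rw [edgeWeight, edgeWeight, ← add_assoc, Nat.add_sub_cancel,
    show v + 1 + e + B - 1 = v + e + B by lia, pow_succ]
  linear_combination (v + e) * (v + e + B).choose B * (1 / 4) ^ v * h1 +
    (A + v) * (A + v - 1).choose v * (1 / 4) ^ v * h2

theorem edgeWeight_zero_le_one (hA : 4 ≤ A) : edgeWeight A B 0 0 ≤ edgeWeight A B 0 1 := by
  have hA' : (4 : ℝ) ≤ A := by exact_mod_cast hA
  rcases B.eq_zero_or_pos with rfl | hB
  · simp [edgeWeight]
    linarith
  · simp [edgeWeight, Nat.choose_eq_zero_of_lt (show B - 1 < B by lia)]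

theorem one_sub_mul_le_mul_of_le_add {p q e J : ℝ} (hJ : 1 ≤ J) (hp : 0 ≤ p) (he : 0 ≤ e)
    (hqp : q ≤ p + J) (hq : 4 * J ^ 2 ≤ q) :
    (1 - 1 / (2 * J)) * ((q + 1) * (q + e)) ≤ (p + 1) * (p + e) := by
  set x := 1 / (2 * J)
  have hxJ : x * J = 1 / 2 := by simp only [x]; field_simp
  have hx0 : 0 ≤ x := by positivity
  have hx1 : x ≤ 1 / 2 := by nlinarith
  have hxq : J ≤ x / 2 * q := by
    calc J = x / 2 * (4 * J ^ 2) := by linear_combination -2 * J * hxJ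
      _ ≤ x / 2 * q := by gcongr
  have hq0 : 0 ≤ q := by nlinarith
  calc (1 - x) * ((q + 1) * (q + e))
      ≤ (1 - x / 2) ^ 2 * ((q + 1) * (q + e)) := by gcongr; nlinarith
    _ = ((1 - x / 2) * (q + 1)) * ((1 - x / 2) * (q + e)) := by ring
    _ ≤ (p + 1) * (p + e) :=
        mul_le_mul (by nlinarith) (by nlinarith) (mul_nonneg (by linarith) (by linarith))
          (by linarith)

theorem one_sub_mul_edgeWeight_le_succ (hA : 1 ≤ A) (hJ : 1 ≤ J) (hAu : 32 * J ^ 2 ≤ A + u)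
    (hratio : (4 * (u + 1) * (u + e) : ℝ) ≤ (A + u) * (u + e + B)) (huv : u ≤ v)
    (hvu : v ≤ u + J) :
    (1 - 1 / (2 * J)) * edgeWeight A B e v ≤ edgeWeight A B e (v + 1) := by
  have hJ' : (1 : ℝ) ≤ J := by exact_mod_cast hJ
  have hAu' : (32 * J ^ 2 : ℝ) ≤ A + u := by exact_mod_cast hAu
  have huv' : (u : ℝ) ≤ v := by exact_mod_cast huv
  have hvu' : (v : ℝ) ≤ u + J := by exact_mod_cast hvu
  have hx : 1 - 1 / (2 * J : ℝ) ≤ 1 := by simp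
  rcases Nat.eq_zero_or_pos (v + e) with hve | hve
  · obtain ⟨rfl, rfl⟩ : v = 0 ∧ e = 0 := by lia
    have hA4 : 4 ≤ A := by nlinarith
    exact (mul_le_of_le_one_left edgeWeight_nonneg hx).trans (edgeWeight_zero_le_one hA4)
  have hcoeff : (1 - 1 / (2 * J)) * (4 * (v + 1) * (v + e) : ℝ) ≤ (A + v) * (v + e + B) := by
    rcases le_or_gt (4 * ((v : ℝ) + 1)) (A + v) with h4 | h4
    · calc (1 - 1 / (2 * J)) * (4 * (v + 1) * (v + e) : ℝ)
          ≤ 4 * (v + 1) * (v + e) := mul_le_of_le_one_left (by positivity) hx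
        _ ≤ (A + v) * (v + e + B) := mul_le_mul h4 (by simp) (by positivity) (by positivity)
    · calc (1 - 1 / (2 * J)) * (4 * (v + 1) * (v + e) : ℝ)
          = 4 * ((1 - 1 / (2 * J)) * ((v + 1) * (v + e))) := by ring
        _ ≤ 4 * ((u + 1) * (u + e)) := by
            refine mul_le_mul_of_nonneg_left ?_ zero_le_four
            exact one_sub_mul_le_mul_of_le_add hJ' u.cast_nonneg e.cast_nonneg hvu'
              (by nlinarith)
        _ ≤ (A + u) * (u + e + B) := by linarith
        _ ≤ (A + v) * (v + e + B) := by gcongr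
  have hpos : 0 < (4 * (v + 1) * (v + e) : ℝ) := by
    have : (0 : ℝ) < v + e := by exact_mod_cast hve
    positivity
  refine le_of_mul_le_mul_left ?_ hpos
  calc (4 * (v + 1) * (v + e) : ℝ) * ((1 - 1 / (2 * J)) * edgeWeight A B e v)
      = (1 - 1 / (2 * J)) * (4 * (v + 1) * (v + e)) * edgeWeight A B e v := by ring
    _ ≤ (A + v) * (v + e + B) * edgeWeight A B e v := by gcongr; exact edgeWeight_nonneg
    _ = _ := (edgeWeight_succ hA).symm

theorem one_sub_mul_edgeWeight_succ_le (hA : 1 ≤ A) (hJ : 1 ≤ J) (hu : 4 * J ^ 2 ≤ u)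
    (hratio : ((A + u) * (u + e + B) : ℝ) ≤ 4 * (u + 1) * (u + e)) (hvu : v < u)
    (huv : u ≤ v + J) :
    (1 - 1 / (2 * J)) * edgeWeight A B e (v + 1) ≤ edgeWeight A B e v := by
  have hJ' : (1 : ℝ) ≤ J := by exact_mod_cast hJ
  have hvu' : (v : ℝ) ≤ u := by exact_mod_cast hvu.le
  have huv' : (u : ℝ) ≤ v + J := by exact_mod_cast huv
  have hx : 1 / (2 * J : ℝ) ≤ 1 := by rw [div_le_one (by linarith)]; linarith
  have hcoeff : (1 - 1 / (2 * J)) * ((A + v) * (v + e + B) : ℝ) ≤ 4 * (v + 1) * (v + e) := by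
    calc (1 - 1 / (2 * J)) * ((A + v) * (v + e + B) : ℝ)
        ≤ (1 - 1 / (2 * J)) * ((A + u) * (u + e + B)) := by
          refine mul_le_mul_of_nonneg_left ?_ (sub_nonneg.2 hx)
          gcongr
      _ ≤ (1 - 1 / (2 * J)) * (4 * (u + 1) * (u + e)) :=
          mul_le_mul_of_nonneg_left hratio (sub_nonneg.2 hx)
      _ = 4 * ((1 - 1 / (2 * J)) * ((u + 1) * (u + e))) := by ring
      _ ≤ 4 * ((v + 1) * (v + e)) := by
          refine mul_le_mul_of_nonneg_left ?_ zero_le_four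
          exact one_sub_mul_le_mul_of_le_add hJ' v.cast_nonneg e.cast_nonneg huv'
            (by exact_mod_cast hu)
      _ = 4 * (v + 1) * (v + e) := by ring
  have hv : 0 < v := by nlinarith
  refine le_of_mul_le_mul_left ?_ (show (0 : ℝ) < (A + v) * (v + e + B) by positivity)
  calc ((A + v) * (v + e + B) : ℝ) * ((1 - 1 / (2 * J)) * edgeWeight A B e (v + 1))
      = (1 - 1 / (2 * J)) * ((A + v) * (v + e + B)) * edgeWeight A B e (v + 1) := by ring
    _ ≤ 4 * (v + 1) * (v + e) * edgeWeight A B e (v + 1) := by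
        gcongr
        exact edgeWeight_nonneg
    _ = _ := edgeWeight_succ hA

/-- As a function of `v`, the edge weight is unimodal, with relative increments of order `1 / J` on
the `J` steps from `u` towards its mode. -/
theorem half_edgeWeight_le (hJ : 32 * J ^ 2 ≤ A + u) :
    (∀ j ≤ J, edgeWeight A B e u / 2 ≤ edgeWeight A B e (u + j)) ∨
      J ≤ u ∧ ∀ j ≤ J, edgeWeight A B e u / 2 ≤ edgeWeight A B e (u - j) := by
  have hnonneg (v : ℕ) : 0 ≤ edgeWeight A B e v := edgeWeight_nonneg
  rcases J.eq_zero_or_pos with rfl | hJ0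
  · exact .inl fun j hj ↦ by simpa [Nat.le_zero.1 hj] using hnonneg u
  rcases A.eq_zero_or_pos with rfl | hA
  · have hu : u - 1 < u := by
      have := pow_pos hJ0 2
      lia
    have hzero : edgeWeight 0 B e u = 0 := by
      simp [edgeWeight, Nat.choose_eq_zero_of_lt hu]
    exact .inl fun j _ ↦ by simpa [hzero] using hnonneg _
  have hJx : J * (1 / (2 * J : ℝ)) ≤ 1 / 2 := le_of_eq (by field_simp)
  rcases le_or_gt (4 * (u + 1) * (u + e) : ℝ) ((A + u) * (u + e + B)) with hratio | hratio
  · exact .inl fun j hj ↦ half_le_of_one_sub_mul_le (f := fun k ↦ edgeWeight A B e (u + k))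
      (by positivity) hJx (hnonneg _)
      (fun k hk ↦ one_sub_mul_edgeWeight_le_succ hA hJ0 hJ hratio (by lia) (by lia)) hj
  · have hu : A + u < 4 * (u + 1) := by
      by_contra! hcon
      have : (4 * (u + 1) : ℝ) ≤ A + u := by exact_mod_cast hcon
      exact hratio.not_ge (mul_le_mul this (by simp) (by positivity) (by positivity))
    have hJu : 4 * J ^ 2 ≤ u := by nlinarith
    have hJu' : J ≤ u := by nlinarith
    refine .inr ⟨hJu', fun j hj ↦ half_le_of_one_sub_mul_le
      (f := fun k ↦ edgeWeight A B e (u - k)) (by positivity) hJx (hnonneg _) (fun k hk ↦ ?_) hj⟩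
    have := one_sub_mul_edgeWeight_succ_le hA hJ0 hJu hratio.le
      (show u - (k + 1) < u by lia) (by lia)
    rwa [show u - (k + 1) + 1 = u - k by lia] at this

theorem mul_edgeWeight_le_tsum (hJ : 32 * J ^ 2 ≤ A + u) :
    (J + 1) * ENNReal.ofReal (edgeWeight A B e u) ≤
      2 * ∑' v, ENNReal.ofReal (edgeWeight A B e v) := by
  obtain ⟨g, hinj, hg⟩ : ∃ g : ℕ → ℕ, Set.InjOn g (Finset.range (J + 1)) ∧
      ∀ j ≤ J, edgeWeight A B e u / 2 ≤ edgeWeight A B e (g j) := by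
    rcases half_edgeWeight_le hJ with h | ⟨hJu, h⟩
    · exact ⟨_, (add_right_injective u).injOn, h⟩
    · refine ⟨_, fun i hi j hj hij ↦ ?_, h⟩
      simp only [Finset.coe_range, Set.mem_Iio] at hi hj
      lia
  have htwo (j : ℕ) (hj : j ∈ Finset.range (J + 1)) : ENNReal.ofReal (edgeWeight A B e u) ≤
      2 * ENNReal.ofReal (edgeWeight A B e (g j)) := by
    rw [← ENNReal.ofReal_ofNat, ← ENNReal.ofReal_mul (by simp)]
    have := hg j (Finset.mem_range_succ_iff.1 hj)
    exact ENNReal.ofReal_le_ofReal (by linarith)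
  calc (J + 1) * ENNReal.ofReal (edgeWeight A B e u)
      = ∑ _ ∈ Finset.range (J + 1), ENNReal.ofReal (edgeWeight A B e u) := by simp
    _ ≤ ∑ j ∈ Finset.range (J + 1), 2 * ENNReal.ofReal (edgeWeight A B e (g j)) :=
        Finset.sum_le_sum htwo
    _ = 2 * ∑ v ∈ (Finset.range (J + 1)).image g, ENNReal.ofReal (edgeWeight A B e v) := by
        rw [Finset.sum_image hinj, Finset.mul_sum]
    _ ≤ 2 * ∑' v, ENNReal.ofReal (edgeWeight A B e v) := by
        gcongr
        exact ENNReal.sum_le_tsum _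

theorem ofReal_edgeWeight : ENNReal.ofReal (edgeWeight A B e v) =
    (A + v - 1).choose v * (v + e + B - 1).choose B * (2⁻¹ * 2⁻¹) ^ v := by
  have h4 : ENNReal.ofReal (1 / 4) = 2⁻¹ * 2⁻¹ := by
    rw [show (1 / 4 : ℝ) = 2⁻¹ * 2⁻¹ by norm_num, ENNReal.ofReal_mul (by norm_num),
      ENNReal.ofReal_inv_of_pos two_pos, ENNReal.ofReal_ofNat]
  rw [edgeWeight, ENNReal.ofReal_mul (by positivity), ENNReal.ofReal_mul (by positivity),
    ENNReal.ofReal_pow (by positivity), ENNReal.ofReal_natCast, ENNReal.ofReal_natCast, h4]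

theorem siteWeight_mul_siteWeight_right (y : ℤ) (A B e v : ℕ) :
    siteWeight y (y + 1) A v * siteWeight y (y + 2) (v + e) B =
      2⁻¹ ^ (A + e + B) * ENNReal.ofReal (edgeWeight A B e v) := by
  rw [ofReal_edgeWeight, siteWeight_of_lt (by lia), siteWeight_of_lt (by lia)]
  ring

theorem siteWeight_mul_siteWeight_left (y : ℤ) (A B e v : ℕ) :
    siteWeight y (y - 1) v A * siteWeight y (y - 2) B (v + e) =
      2⁻¹ ^ (A + e + B) * ENNReal.ofReal (edgeWeight A B e v) := by
  rw [ofReal_edgeWeight, siteWeight_of_gt (by lia), siteWeight_of_gt (by lia), add_comm v A,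
    add_comm B]
  ring

end Edge

/-! ### The upper bound for the mass of triples -/

section UpperBound

/-- The function `f` attains its maximum `h` exactly at `y` and its two neighbours. -/
def IsTopTriple (h : ℕ) (y : ℤ) (f : ℤ → ℕ) : Prop :=
  (∀ z ∈ Set.Icc (y - 1) (y + 1), f z = h) ∧ ∀ z ∉ Set.Icc (y - 1) (y + 1), f z < h

/-- The relaxation of `IsTopTriple` in which the sites at distance one or two from `y` are
unconstrained. -/
def IsTopNear (h : ℕ) (y : ℤ) (f : ℤ → ℕ) : Prop :=
  f y = h ∧ ∀ z ∉ Set.Icc (y - 2) (y + 2), f z < h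

/-- The paths from `s` which, added to the earlier occupation `l`, end in the middle of a triple of
favorite sites of height `h`. -/
def triplePaths (l : ℤ → ℕ) (s : ℤ) (h : ℕ) : Set (List Bool) :=
  profile s ⁻¹' {p | IsTopTriple h p.endpoint (l + p.visits)}

/-- The analogue of `triplePaths` for the relaxed condition `IsTopNear`. -/
def nearPaths (l : ℤ → ℕ) (s : ℤ) (h : ℕ) : Set (List Bool) :=
  profile s ⁻¹' {p | IsTopNear h p.endpoint (l + p.visits)}

variable {l : ℤ → ℕ} {s : ℤ} {h : ℕ}

/-- A path and a proper extension of it in the same class have endpoints which are either equal,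
and then the occupation there has grown beyond `h`, or at distance at least five. -/
theorem isAntichain_nearPaths_inter (ρ : ℤ) :
    IsAntichain (· <+: ·) (nearPaths l s h ∩ {w | (profile s w).endpoint % 5 = ρ}) := by
  rintro v ⟨⟨hv, -⟩, hvρ⟩ _ ⟨⟨hw, hw'⟩, hwρ⟩ hne ⟨w, rfl⟩
  have hw0 : w ≠ [] := by
    rintro rfl
    simp at hne
  simp only [Set.mem_ofPred_eq, Pi.add_apply] at hv hw hw' hvρ hwρ
  by_cases hendpoint : (profile s (v ++ w)).endpoint = (profile s v).endpoint
  · have hpos := visits_profile_endpoint_pos (profile s v).endpoint hw0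
    rw [← endpoint_profile_append, hendpoint] at hpos
    rw [hendpoint, visits_profile_append, Pi.add_apply] at hw
    lia
  · have hlt := hw' (profile s v).endpoint (by simp only [Set.mem_Icc]; lia)
    rw [visits_profile_append, Pi.add_apply] at hlt
    lia

theorem mass_nearPaths_le : mass (nearPaths l s h) ≤ 5 := by
  have hunion : nearPaths l s h ⊆ ⋃ ρ ∈ Finset.range 5,
      nearPaths l s h ∩ {w | (profile s w).endpoint % 5 = (ρ : ℤ)} := by
    intro w hw
    simp only [Finset.mem_range, Set.mem_iUnion, Set.mem_inter_iff, Set.mem_ofPred_eq]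
    exact ⟨((profile s w).endpoint % 5).toNat, by lia, hw, by lia⟩
  calc mass (nearPaths l s h)
      ≤ ∑ ρ ∈ Finset.range 5, mass (nearPaths l s h ∩ {w | (profile s w).endpoint % 5 = (ρ : ℤ)}) :=
        (mass_mono hunion).trans (ENNReal.tsum_biUnion_le weight _ _)
    _ ≤ ∑ _ ∈ Finset.range 5, 1 :=
        Finset.sum_le_sum fun _ _ ↦ mass_le_one_of_isAntichain (isAntichain_nearPaths_inter _)
    _ = 5 := by simp

namespace Profile

variable {p : Profile} {u v : ℕ}

/-- The profile of a path from `s` after changing to `u` and `v` the numbers of its outward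
crossings of the edges `{y + 1, y + 2}` and `{y - 2, y - 1}`, where `y` is its endpoint. -/
def perturb (s : ℤ) (p : Profile) (u v : ℕ) : Profile where
  endpoint := p.endpoint
  down := Function.update (Function.update p.down (p.endpoint - 1) v) (p.endpoint + 2)
    (u + if p.endpoint + 1 < s then 1 else 0)
  up := Function.update (Function.update p.up (p.endpoint + 1) u) (p.endpoint - 2)
    (v + if s < p.endpoint - 1 then 1 else 0)

theorem IsFlow.perturb (hp : p.IsFlow s) (u v : ℕ) : (p.perturb s u v).IsFlow s := by
  intro z
  have := hp z
  simp only [Profile.perturb, Function.update_apply]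
  grind

theorem IsFlow.perturb_self (hp : p.IsFlow s) :
    p.perturb s (p.up (p.endpoint + 1)) (p.down (p.endpoint - 1)) = p := by
  have hright := hp (p.endpoint + 1)
  have hleft := hp (p.endpoint - 2)
  ext z
  · rfl
  · simp only [Profile.perturb, Function.update_apply]
    grind
  · simp only [Profile.perturb, Function.update_apply]
    grind

theorem exists_pathMass_perturb (hp : p.IsFlow s) {J : Finset ℤ}
    (hJ : ∀ z ∉ J, p.down z = 0 ∧ p.up z = 0) :
    ∃ K, ∀ u v, pathMass s (p.perturb s u v) = K *
      (ENNReal.ofReal (edgeWeight (p.down (p.endpoint + 1)) (p.up (p.endpoint + 2))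
        (if p.endpoint + 1 < s then 1 else 0) u) *
      ENNReal.ofReal (edgeWeight (p.up (p.endpoint - 1)) (p.down (p.endpoint - 2))
        (if s < p.endpoint - 1 then 1 else 0) v)) := by
  set y := p.endpoint
  set D : Finset ℤ := {y + 1, y + 2, y - 1, y - 2}
  have hD (u v : ℕ) : ∏ z ∈ D, siteWeight y z ((p.perturb s u v).down z) ((p.perturb s u v).up z) =
      (siteWeight y (y + 1) (p.down (y + 1)) u *
        siteWeight y (y + 2) (u + if y + 1 < s then 1 else 0) (p.up (y + 2))) *
      (siteWeight y (y - 1) v (p.up (y - 1)) *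
        siteWeight y (y - 2) (p.down (y - 2)) (v + if s < y - 1 then 1 else 0)) := by
    simp only [D]
    rw [Finset.prod_insert (by simp; lia), Finset.prod_insert (by simp; lia),
      Finset.prod_insert (by simp), Finset.prod_singleton, ← mul_assoc]
    congr 2 <;> simp [Profile.perturb, Function.update_apply, y] <;> grind
  have hrest (u v : ℕ) (z : ℤ) (hz : z ∉ D) :
      (p.perturb s u v).down z = p.down z ∧ (p.perturb s u v).up z = p.up z := by
    simp only [D, Finset.mem_insert, Finset.mem_singleton, not_or] at hz
    simp only [Profile.perturb, Function.update_apply]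
    grind
  refine ⟨(∏ z ∈ (J ∪ D) \ D, siteWeight y z (p.down z) (p.up z)) *
    (2⁻¹ ^ (p.down (y + 1) + (if y + 1 < s then 1 else 0) + p.up (y + 2)) *
      2⁻¹ ^ (p.up (y - 1) + (if s < y - 1 then 1 else 0) + p.down (y - 2))), fun u v ↦ ?_⟩
  have hJD (z : ℤ) (hz : z ∉ J ∪ D) :
      (p.perturb s u v).down z = 0 ∧ (p.perturb s u v).up z = 0 := by
    rw [Finset.mem_union, not_or] at hz
    rw [(hrest u v z hz.2).1, (hrest u v z hz.2).2]
    exact hJ z hz.1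
  rw [pathMass_eq_prod (hp.perturb u v) hJD, show (p.perturb s u v).endpoint = y from rfl,
    ← Finset.prod_sdiff Finset.subset_union_right, hD, siteWeight_mul_siteWeight_right,
    siteWeight_mul_siteWeight_left]
  rw [Finset.prod_congr rfl fun z hz ↦ by
    rw [(hrest u v z (Finset.mem_sdiff.1 hz).2).1, (hrest u v z (Finset.mem_sdiff.1 hz).2).2]]
  ring

theorem mul_pathMass_le_tsum_perturb (hp : p.IsFlow s) {J : ℕ}
    (hright : 32 * J ^ 2 ≤ p.down (p.endpoint + 1) + p.up (p.endpoint + 1))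
    (hleft : 32 * J ^ 2 ≤ p.up (p.endpoint - 1) + p.down (p.endpoint - 1)) :
    (J + 1) ^ 2 * pathMass s p ≤ 4 * ∑' q : ℕ × ℕ, pathMass s (p.perturb s q.1 q.2) := by
  rcases eq_or_ne (pathMass s p) 0 with h0 | h0
  · simp [h0]
  obtain ⟨I, hI⟩ := (exists_isFlow_of_pathMass_ne_zero h0).2
  obtain ⟨K, hK⟩ := exists_pathMass_perturb hp hI
  have hself := hK (p.up (p.endpoint + 1)) (p.down (p.endpoint - 1))
  rw [hp.perturb_self] at hself
  simp only [hself, hK, ENNReal.tsum_mul_left, ENNReal.tsum_prod', ENNReal.tsum_mul_right]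
  set f := fun u ↦ ENNReal.ofReal (edgeWeight (p.down (p.endpoint + 1)) (p.up (p.endpoint + 2))
    (if p.endpoint + 1 < s then 1 else 0) u)
  set g := fun v ↦ ENNReal.ofReal (edgeWeight (p.up (p.endpoint - 1)) (p.down (p.endpoint - 2))
    (if s < p.endpoint - 1 then 1 else 0) v)
  calc (J + 1) ^ 2 * (K * (f (p.up (p.endpoint + 1)) * g (p.down (p.endpoint - 1))))
      = K * (((J + 1) * f (p.up (p.endpoint + 1))) *
          ((J + 1) * g (p.down (p.endpoint - 1)))) := by ring
    _ ≤ K * ((2 * ∑' u, f u) * (2 * ∑' v, g v)) :=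
        mul_le_mul' le_rfl <|
          mul_le_mul' (mul_edgeWeight_le_tsum hright) (mul_edgeWeight_le_tsum hleft)
    _ = 4 * (K * ((∑' u, f u) * ∑' v, g v)) := by ring

theorem isTopNear_perturb (hp : IsTopTriple h p.endpoint (l + p.visits)) (u v : ℕ) :
    IsTopNear h p.endpoint (l + (p.perturb s u v).visits) := by
  have hvisits (z : ℤ) (hz : z = p.endpoint ∨ z ∉ Set.Icc (p.endpoint - 2) (p.endpoint + 2)) :
      (p.perturb s u v).visits z = p.visits z := by
    simp only [Set.mem_Icc] at hz
    simp only [Profile.visits, Profile.perturb, Function.update_apply]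
    grind
  refine ⟨?_, fun z hz ↦ ?_⟩
  · rw [Pi.add_apply, hvisits _ (.inl rfl)]
    exact hp.1 _ (by simp)
  · rw [Pi.add_apply, hvisits _ (.inr hz)]
    exact hp.2 _ (by simp only [Set.mem_Icc] at hz ⊢; lia)

/-- The forgotten crossing numbers are recovered from the heights of the sites at distance one. -/
theorem perturb_injOn :
    Set.InjOn (fun x : Profile × ℕ × ℕ ↦ x.1.perturb s x.2.1 x.2.2)
      {x | x.1.IsFlow s ∧ IsTopTriple h x.1.endpoint (l + x.1.visits)} := by
  rintro ⟨⟨y, a, b⟩, u, v⟩ ⟨hp, htop, -⟩ ⟨⟨y', a', b'⟩, u', v'⟩ ⟨hp', htop', -⟩ heq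
  obtain ⟨rfl, ha, hb⟩ := Profile.ext_iff.1 heq
  simp only [Profile.perturb, Profile.visits, Profile.IsFlow, Pi.add_apply, Set.mem_Icc,
    funext_iff, Function.update_apply] at ha hb hp hp' htop htop'
  have hu := hb (y + 1)
  have hv := ha (y - 1)
  have hb0 := hb y
  have ha0 := ha y
  have hr := htop (y + 1) (by lia)
  have hr' := htop' (y + 1) (by lia)
  have hl := htop (y - 1) (by lia)
  have hl' := htop' (y - 1) (by lia)
  have har : a (y + 2) = a' (y + 2) := by grind
  have hbl : b (y - 2) = b' (y - 2) := by grind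
  have : b (y + 1) = b' (y + 1) := by have := hp (y + 1); have := hp' (y + 1); grind
  have : a (y - 1) = a' (y - 1) := by have := hp (y - 2); have := hp' (y - 2); grind
  have ha' : a = a' := by ext z; have := ha z; grind
  have hb' : b = b' := by ext z; have := hb z; grind
  have hu' : u = u' := by grind
  have hv' : v = v' := by grind
  simp [Profile.perturb, ha', hb', hu', hv']

theorem IsFlow.le_departures (hp : p.IsFlow s) (htop : IsTopTriple h p.endpoint (l + p.visits))
    {r : ℕ} (hr : ∀ z, l z + r ≤ h) :
    r ≤ p.down (p.endpoint + 1) + p.up (p.endpoint + 1) ∧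
      r ≤ p.up (p.endpoint - 1) + p.down (p.endpoint - 1) := by
  have hright := htop.1 (p.endpoint + 1) (by simp only [Set.mem_Icc]; lia)
  have hleft := htop.1 (p.endpoint - 1) (by simp only [Set.mem_Icc]; lia)
  simp only [Profile.visits, Pi.add_apply] at hright hleft
  have := hr (p.endpoint + 1)
  have := hr (p.endpoint - 1)
  have := hp p.endpoint
  have := hp (p.endpoint + 1)
  have := hp (p.endpoint - 1)
  have := hp (p.endpoint - 2)
  grind

end Profile

theorem sq_mul_mass_triplePaths_le {J : ℕ} (hJ : ∀ z, l z + 32 * J ^ 2 ≤ h) :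
    (J + 1) ^ 2 * mass (triplePaths l s h) ≤ 4 * mass (nearPaths l s h) := by
  set T : Set Profile := {p | p.IsFlow s ∧ IsTopTriple h p.endpoint (l + p.visits)}
  have hT : triplePaths l s h = profile s ⁻¹' T := by
    ext w
    exact (and_iff_right (isFlow_profile s w)).symm
  have hinj : Function.Injective fun x : T × ℕ × ℕ ↦
      (⟨x.1.1.perturb s x.2.1 x.2.2, Profile.isTopNear_perturb x.1.2.2 _ _⟩ :
        {p : Profile | IsTopNear h p.endpoint (l + p.visits)}) := by
    intro x x' hxx'
    have := Profile.perturb_injOn (x₁ := (x.1.1, x.2)) x.1.2 (x₂ := (x'.1.1, x'.2)) x'.1.2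
      (Subtype.ext_iff.1 hxx')
    exact Prod.ext (Subtype.ext (Prod.ext_iff.1 this).1) (Prod.ext_iff.1 this).2
  calc (J + 1) ^ 2 * mass (triplePaths l s h)
      = ∑' p : T, (J + 1) ^ 2 * pathMass s p := by
        rw [hT, mass_preimage_eq_tsum, ENNReal.tsum_mul_left]
        rfl
    _ ≤ ∑' p : T, 4 * ∑' q : ℕ × ℕ, pathMass s (p.1.perturb s q.1 q.2) :=
        ENNReal.tsum_le_tsum fun p ↦
          have hdep := p.2.1.le_departures p.2.2 hJ
          p.1.mul_pathMass_le_tsum_perturb p.2.1 hdep.1 hdep.2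
    _ = 4 * ∑' x : T × ℕ × ℕ, pathMass s (x.1.1.perturb s x.2.1 x.2.2) := by
        rw [ENNReal.tsum_mul_left, ENNReal.tsum_prod']
    _ ≤ 4 * ∑' p : {p : Profile | IsTopNear h p.endpoint (l + p.visits)}, pathMass s p := by
        gcongr
        exact ENNReal.tsum_comp_le_tsum_of_injective hinj fun p ↦ pathMass s p
    _ = 4 * mass (nearPaths l s h) := by
        rw [nearPaths, mass_preimage_eq_tsum]
        rfl

theorem mul_mass_triplePaths_le {r : ℕ} (hr : ∀ z, l z + r ≤ h) :
    r * mass (triplePaths l s h) ≤ 640 := by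
  set J := Nat.sqrt (r / 32)
  have hJ : 32 * J ^ 2 ≤ r := by
    have := Nat.sqrt_le' (r / 32)
    lia
  have hrJ : r ≤ 32 * (J + 1) ^ 2 := by
    have := Nat.lt_succ_sqrt' (r / 32)
    lia
  calc r * mass (triplePaths l s h)
      ≤ (32 * (J + 1) ^ 2) * mass (triplePaths l s h) := by
        gcongr
        exact_mod_cast hrJ
    _ = 32 * ((J + 1) ^ 2 * mass (triplePaths l s h)) := by ring
    _ ≤ 32 * (4 * mass (nearPaths l s h)) :=
        mul_le_mul' le_rfl <|
          sq_mul_mass_triplePaths_le fun z ↦ (Nat.add_le_add_left hJ _).trans (hr z)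
    _ ≤ 32 * (4 * 5) := by
        gcongr
        exact mass_nearPaths_le
    _ = 640 := by norm_num

end UpperBound

/-! ### Binomial and negative binomial weights -/

/-- The probability that a binomial variable with parameters `n` and `1 / 2` equals `k`. -/
noncomputable def binomialWeight (n k : ℕ) : ℝ :=
  n.choose k * (1 / 2) ^ n

theorem binomialWeight_nonneg (n k : ℕ) : 0 ≤ binomialWeight n k := by
  unfold binomialWeight
  positivity

theorem binomialWeight_symm {n k : ℕ} (hk : k ≤ n) :
    binomialWeight n (n - k) = binomialWeight n k := by
  rw [binomialWeight, Nat.choose_symm hk, binomialWeight]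

theorem sixteen_pow_le_centralBinom_sq {m : ℕ} (hm : 1 ≤ m) :
    16 ^ m ≤ m.centralBinom ^ 2 * (4 * m) := by
  induction m, hm using Nat.le_induction with
  | base => simp [Nat.centralBinom, Nat.choose]
  | succ m _ ih =>
    have recurrence : (m + 1) * (m + 1).centralBinom = 2 * (2 * m + 1) * m.centralBinom :=
      Nat.succ_mul_centralBinom_succ m
    refine Nat.le_of_mul_le_mul_left ?_ m.succ_pos
    calc (m + 1) * 16 ^ (m + 1) ≤ (m + 1) * (m.centralBinom ^ 2 * (4 * m) * 16) := by
          rw [pow_succ]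
          gcongr
      _ = 16 * (4 * m * (m + 1)) * m.centralBinom ^ 2 := by ring
      _ ≤ 16 * (2 * m + 1) ^ 2 * m.centralBinom ^ 2 := by gcongr; lia
      _ = 4 * (2 * (2 * m + 1) * m.centralBinom) ^ 2 := by ring
      _ = (m + 1) * ((m + 1).centralBinom ^ 2 * (4 * (m + 1))) := by
          rw [← recurrence]
          ring

theorem four_pow_le_choose_half_sq {n : ℕ} (hn : 1 ≤ n) :
    4 ^ n ≤ n.choose (n / 2) ^ 2 * (2 * (n + 1)) := by
  obtain ⟨m, rfl | rfl⟩ := n.even_or_odd'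
  · have := sixteen_pow_le_centralBinom_sq (show 1 ≤ m by lia)
    rw [Nat.centralBinom] at this
    rw [pow_mul, Nat.mul_div_cancel_left m two_pos]
    grind
  · have central := sixteen_pow_le_centralBinom_sq (show 1 ≤ m + 1 by lia)
    have choose_eq : (m + 1).centralBinom = 2 * (2 * m + 1).choose m := by
      have := Nat.choose_symm_half m
      rw [Nat.centralBinom, mul_add_one, Nat.choose_succ_succ]
      lia
    rw [choose_eq, pow_succ] at central
    rw [show (2 * m + 1) / 2 = m by lia, pow_succ, pow_mul]
    norm_num
    linarith

theorem one_le_binomialWeight_half_sq {n : ℕ} (hn : 1 ≤ n) :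
    1 ≤ binomialWeight n (n / 2) ^ 2 * (2 * (n + 1)) := by
  have half_pow : ((1 / 2 : ℝ) ^ n) ^ 2 * 4 ^ n = 1 := by
    rw [pow_right_comm, ← mul_pow]
    norm_num
  have choose_bound : (4 : ℝ) ^ n ≤ n.choose (n / 2) ^ 2 * (2 * (n + 1)) := by
    exact_mod_cast four_pow_le_choose_half_sq hn
  calc (1 : ℝ) = ((1 / 2) ^ n) ^ 2 * 4 ^ n := half_pow.symm
    _ ≤ ((1 / 2) ^ n) ^ 2 * (n.choose (n / 2) ^ 2 * (2 * (n + 1))) := by gcongr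
    _ = binomialWeight n (n / 2) ^ 2 * (2 * (n + 1)) := by
        rw [binomialWeight]
        ring

theorem binomialWeight_succ_mul {n k : ℕ} (hk : k ≤ n) :
    binomialWeight n (k + 1) * (k + 1) = binomialWeight n k * (n - k) := by
  have := Nat.choose_succ_right_eq n k
  rw [binomialWeight, binomialWeight, ← Nat.cast_sub hk]
  have : (n.choose (k + 1) : ℝ) * (k + 1) = n.choose k * (n - k : ℕ) := by exact_mod_cast this
  linear_combination (1 / 2 : ℝ) ^ n * this

theorem one_sub_mul_binomialWeight_le {n k q : ℕ} (hn : 0 < n) (hk : 2 * (k + 1) ≤ n)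
    (hk' : n ≤ 2 * k + 1 + 8 * q) :
    (1 - 16 * q / n) * binomialWeight n (k + 1) ≤ binomialWeight n k := by
  have hn' : (0 : ℝ) < n := by exact_mod_cast hn
  have hk : (2 : ℝ) * (k + 1) ≤ n := by exact_mod_cast hk
  have hk' : (n : ℝ) ≤ 2 * k + 1 + 8 * q := by exact_mod_cast hk'
  have ratio : (1 - 16 * q / n) * (n - k) ≤ (k + 1 : ℝ) := by
    have : 8 * (q : ℝ) ≤ 16 * q / n * (n - k) := by
      rw [div_mul_eq_mul_div, le_div_iff₀ hn']
      nlinarith [q.cast_nonneg (α := ℝ)]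
    linarith
  refine le_of_mul_le_mul_right ?_ (show (0 : ℝ) < n - k by linarith)
  calc (1 - 16 * q / n) * binomialWeight n (k + 1) * (n - k)
      = binomialWeight n (k + 1) * ((1 - 16 * q / n) * (n - k)) := by ring
    _ ≤ binomialWeight n (k + 1) * (k + 1) :=
        mul_le_mul_of_nonneg_left ratio (binomialWeight_nonneg _ _)
    _ = binomialWeight n k * (n - k) := binomialWeight_succ_mul (by exact_mod_cast (by linarith))

theorem one_le_mul_binomialWeight {n k q : ℕ} (hq : 1 ≤ q) (h₁ : 200 * q ^ 2 ≤ n)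
    (h₂ : n ≤ 1600 * q ^ 2) (hk : 2 * k ≤ n) (hk' : n ≤ 2 * k + 8 * q) :
    1 ≤ 120 * q * binomialWeight n k := by
  have hqq : q ≤ q ^ 2 := Nat.le_self_pow two_ne_zero q
  have hn : (0 : ℝ) < n := by exact_mod_cast (by lia)
  have half_le : binomialWeight n (n / 2) / 2 ≤ binomialWeight n k := by
    have := half_le_of_one_sub_mul_le (f := fun i ↦ binomialWeight n (n / 2 - i)) (J := 4 * q)
      (x := 16 * q / n) (j := n / 2 - k) (by positivity) ?_ (binomialWeight_nonneg _ _) ?_ (by lia)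
    · rwa [Nat.sub_sub_self (by lia)] at this
    · have : (200 : ℝ) * q ^ 2 ≤ n := by exact_mod_cast h₁
      rw [mul_div_assoc', div_le_iff₀ hn]
      push_cast
      linarith
    · intro i hi
      rw [show n / 2 - i = n / 2 - (i + 1) + 1 by lia]
      exact one_sub_mul_binomialWeight_le (by lia) (by lia) (by lia)
  have hn' : 2 * ((n : ℝ) + 1) ≤ 3600 * q ^ 2 := by exact_mod_cast (by lia)
  have := binomialWeight_nonneg n (n / 2)
  refine (one_le_sq_iff₀ (mul_nonneg (by positivity) (binomialWeight_nonneg n k))).1 ?_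
  calc 1 ≤ binomialWeight n (n / 2) ^ 2 * (2 * (n + 1)) := one_le_binomialWeight_half_sq (by lia)
    _ ≤ binomialWeight n (n / 2) ^ 2 * (3600 * q ^ 2) := by gcongr
    _ = 14400 * q ^ 2 * (binomialWeight n (n / 2) / 2) ^ 2 := by ring
    _ ≤ 14400 * q ^ 2 * binomialWeight n k ^ 2 := by gcongr
    _ = (120 * q * binomialWeight n k) ^ 2 := by ring

theorem one_div_le_binomialWeight {n k q : ℕ} (hq : 1 ≤ q) (h₁ : 200 * q ^ 2 ≤ n)
    (h₂ : n ≤ 1600 * q ^ 2) (hk : n ≤ 2 * k + 8 * q) (hk' : 2 * k ≤ n + 8 * q) :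
    1 / (120 * (q : ℝ)) ≤ binomialWeight n k := by
  have hqq : q ≤ q ^ 2 := Nat.le_self_pow two_ne_zero q
  rw [div_le_iff₀' (by positivity)]
  rcases le_or_gt (2 * k) n with h | h
  · exact one_le_mul_binomialWeight hq h₁ h₂ h hk
  · rw [← binomialWeight_symm (by lia)]
    exact one_le_mul_binomialWeight hq h₁ h₂ (by lia) (by lia)

/-- The probability of seeing `u` failures before the `m`-th success in fair coin tosses. For
`m = 0` the truncated subtraction makes this the indicator of `u = 0`, as it should be. -/
noncomputable def negBinomialWeight (m u : ℕ) : ℝ :=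
  (m + u - 1).choose u * (1 / 2) ^ (m + u)

theorem negBinomialWeight_nonneg (m u : ℕ) : 0 ≤ negBinomialWeight m u := by
  unfold negBinomialWeight
  positivity

theorem negBinomialWeight_zero_left (u : ℕ) :
    negBinomialWeight 0 u = if u = 0 then 1 else 0 := by
  split_ifs with hu
  · simp [hu, negBinomialWeight]
  · simp [negBinomialWeight, Nat.choose_eq_zero_of_lt (show u - 1 < u by lia)]

theorem one_div_le_negBinomialWeight {m u q : ℕ} (hq : 1 ≤ q) (hm : 1 ≤ m)
    (h₁ : 200 * q ^ 2 ≤ m + u - 1) (h₂ : m + u - 1 ≤ 1600 * q ^ 2)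
    (hu : m + u - 1 ≤ 2 * u + 8 * q) (hu' : 2 * u ≤ m + u - 1 + 8 * q) :
    1 / (240 * (q : ℝ)) ≤ negBinomialWeight m u := by
  have half_binomial : negBinomialWeight m u = 1 / 2 * binomialWeight (m + u - 1) u := by
    rw [negBinomialWeight, binomialWeight, ← pow_sub_one_mul (show m + u ≠ 0 by lia)]
    ring
  calc 1 / (240 * (q : ℝ)) = 1 / 2 * (1 / (120 * q)) := by ring
    _ ≤ negBinomialWeight m u := by
        rw [half_binomial]
        gcongr
        exact one_div_le_binomialWeight hq h₁ h₂ hu hu'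

theorem hasSum_negBinomialWeight_mul_pow (m : ℕ) {x : ℝ} (hx0 : 0 ≤ x) (hx1 : x ≤ 1) :
    HasSum (fun u ↦ negBinomialWeight m u * x ^ u) ((1 / (2 - x)) ^ m) := by
  rcases m.eq_zero_or_pos with rfl | hm
  · have : (fun u ↦ negBinomialWeight 0 u * x ^ u) = fun u ↦ if u = 0 then 1 else 0 := by
      ext u
      rw [negBinomialWeight_zero_left]
      split_ifs with hu <;> simp [hu]
    rw [this, pow_zero]
    exact hasSum_ite_eq 0 1
  obtain ⟨k, rfl⟩ := Nat.exists_eq_add_of_le' hm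
  have geometric := (hasSum_choose_mul_geometric_of_norm_lt_one k (r := x / 2)
    (by rw [Real.norm_of_nonneg (by positivity)]; linarith)).mul_left ((1 / 2 : ℝ) ^ (k + 1))
  have value : (1 / (2 - x)) ^ (k + 1) = (1 / 2) ^ (k + 1) * (1 / (1 - x / 2) ^ (k + 1)) := by
    rw [← one_div_pow, ← mul_pow]
    congr 1
    field
  rw [value]
  refine geometric.congr_fun fun u ↦ ?_
  rw [negBinomialWeight, show k + 1 + u - 1 = u + k by lia, ← Nat.choose_symm_add, pow_add,
    div_eq_mul_one_div x 2, mul_pow]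
  ring

theorem hasSum_negBinomialWeight (m : ℕ) : HasSum (negBinomialWeight m) 1 := by
  simpa [show (2 : ℝ) - 1 = 1 by norm_num] using
    hasSum_negBinomialWeight_mul_pow m zero_le_one le_rfl

theorem negBinomialWeight_succ_mul (m u : ℕ) :
    negBinomialWeight m (u + 1) * (u + 1 : ℕ) = m * negBinomialWeight (m + 1) u := by
  have := Nat.choose_succ_right_eq (m + u) u
  rw [Nat.add_sub_self_right] at this
  have : ((m + u).choose (u + 1) : ℝ) * (u + 1 : ℕ) = (m + u).choose u * m := by exact_mod_cast this
  rw [negBinomialWeight, negBinomialWeight, add_right_comm m 1 u, ← add_assoc, Nat.add_sub_cancel]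
  linear_combination (1 / 2 : ℝ) ^ (m + u + 1) * this

theorem hasSum_negBinomialWeight_mul_cast (m : ℕ) :
    HasSum (fun u : ℕ ↦ negBinomialWeight m u * u) m := by
  rw [← hasSum_nat_add_iff' 1]
  simpa only [Finset.sum_range_one, Nat.cast_zero, mul_zero, sub_zero, mul_one,
    negBinomialWeight_succ_mul] using (hasSum_negBinomialWeight (m + 1)).mul_left (m : ℝ)

/-! ### Survival of a critical branching process below a level -/

section Survival

/-- Consider a critical geometric branching process started from `m` individuals, with one
immigrant in each of the first `j` generations. This is the probability that it is extinct in
generation `N` and that generations `1, …, N` all have fewer than `b` individuals. -/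
noncomputable def survivalWeight (b : ℕ) : ℕ → ℕ → ℕ → ℝ
  | 0, _, m => if m = 0 then 1 else 0
  | N + 1, j, m => ∑ u ∈ Finset.range b,
      negBinomialWeight (m + if 0 < j then 1 else 0) u * survivalWeight b N (j - 1) u

variable {b N j m q : ℕ}

theorem survivalWeight_nonneg (b N j m : ℕ) : 0 ≤ survivalWeight b N j m := by
  induction N generalizing j m with
  | zero =>
    unfold survivalWeight
    positivity
  | succ N ih =>
    exact Finset.sum_nonneg fun u _ ↦ mul_nonneg (negBinomialWeight_nonneg _ _) (ih _ _)

theorem survivalWeight_succ_zero (b N m : ℕ) :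
    survivalWeight b (N + 1) 0 m =
      ∑ u ∈ Finset.range b, negBinomialWeight m u * survivalWeight b N 0 u := rfl

theorem survivalWeight_succ_succ (b N j m : ℕ) :
    survivalWeight b (N + 1) (j + 1) m =
      ∑ u ∈ Finset.range b, negBinomialWeight (m + 1) u * survivalWeight b N j u := by
  simp [survivalWeight]

theorem le_sum_negBinomialWeight_mul {f g : ℕ → ℝ} {a : ℝ} (hgf : ∀ u < b, g u ≤ f u)
    (hg : ∀ u, b ≤ u → g u ≤ 0) (ha : HasSum (fun u ↦ negBinomialWeight m u * g u) a) :
    a ≤ ∑ u ∈ Finset.range b, negBinomialWeight m u * f u := by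
  calc a ≤ ∑ u ∈ Finset.range b, negBinomialWeight m u * g u := by
        rw [← neg_le_neg_iff, ← Finset.sum_neg_distrib]
        refine sum_le_hasSum _ (fun u hu ↦ ?_) ha.neg
        exact neg_nonneg.2 (mul_nonpos_of_nonneg_of_nonpos (negBinomialWeight_nonneg _ _)
          (hg u (by simpa using hu)))
      _ ≤ ∑ u ∈ Finset.range b, negBinomialWeight m u * f u := by
        gcongr with u hu
        · exact negBinomialWeight_nonneg _ _
        · exact hgf u (Finset.mem_range.1 hu)

theorem pow_sub_div_le_survivalWeight_zero (hb : 1 ≤ b) (N m : ℕ) :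
    ((N : ℝ) / (N + 1)) ^ m - m / b ≤ survivalWeight b N 0 m := by
  have hb' : (1 : ℝ) ≤ b := by exact_mod_cast hb
  induction N generalizing m with
  | zero =>
    rcases m.eq_zero_or_pos with rfl | hm
    · simp [survivalWeight]
    · rw [survivalWeight, if_neg hm.ne', Nat.cast_zero, zero_div, zero_pow hm.ne', zero_sub]
      exact neg_nonpos.2 (by positivity)
  | succ N ih =>
    set x : ℝ := N / (N + 1)
    have hx0 : 0 ≤ x := by positivity
    have hx1 : x ≤ 1 := div_le_one_of_le₀ (by linarith) (by positivity)
    have hx : 1 / (2 - x) = (N + 1 : ℕ) / ((N + 1 : ℕ) + 1) := by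
      rw [show 2 - x = (N + 2) / (N + 1) by simp only [x]; field]
      push_cast
      field
    rw [← hx, survivalWeight_succ_zero]
    refine le_sum_negBinomialWeight_mul (g := fun u ↦ x ^ u - u / b) (fun u _ ↦ ih u) ?_ ?_
    · intro u hu
      have : (1 : ℝ) ≤ u / b := (one_le_div (by linarith)).2 (by exact_mod_cast hu)
      linarith [pow_le_one₀ hx0 hx1 (n := u)]
    · simpa only [mul_sub, mul_div_assoc] using
        (hasSum_negBinomialWeight_mul_pow m hx0 hx1).sub
          ((hasSum_negBinomialWeight_mul_cast m).div_const b)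

theorem one_sub_mul_le_survivalWeight (hb : 1 ≤ b) (hN : 2 * b ^ 2 ≤ N + 1) (j m : ℕ) :
    1 - (m + j) * (1 / b + 1 / (2 * b ^ 2)) ≤ survivalWeight b (N + j) j m := by
  have hb' : (1 : ℝ) ≤ b := by exact_mod_cast hb
  set θ : ℝ := 1 / b + 1 / (2 * b ^ 2)
  have hθ : 1 ≤ b * θ := by
    rw [mul_add, mul_one_div_cancel (by positivity)]
    exact le_add_of_nonneg_right (by positivity)
  induction j generalizing m with
  | zero =>
    have hN' : 1 / ((N : ℝ) + 1) ≤ 1 / (2 * b ^ 2) :=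
      one_div_le_one_div_of_le (by positivity) (by exact_mod_cast hN)
    have bernoulli : 1 + m * (-(1 / (N + 1 : ℝ))) ≤ (1 + -(1 / (N + 1 : ℝ))) ^ m :=
      one_add_mul_le_pow (by
        have : 1 / ((N : ℝ) + 1) ≤ 1 := div_le_one_of_le₀ (by linarith) (by positivity)
        linarith) m
    calc 1 - (m + (0 : ℕ)) * θ = 1 - m * (1 / (2 * b ^ 2)) - m / b := by
          simp only [θ]
          ring
      _ ≤ 1 - m * (1 / (N + 1)) - m / b := by gcongr
      _ ≤ (1 + -(1 / (N + 1 : ℝ))) ^ m - m / b := by linarith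
      _ = ((N : ℝ) / (N + 1)) ^ m - m / b := by
          congr 2
          field
      _ ≤ survivalWeight b (N + 0) 0 m := pow_sub_div_le_survivalWeight_zero hb N m
  | succ j ih =>
    rw [← add_assoc, survivalWeight_succ_succ]
    refine le_sum_negBinomialWeight_mul (g := fun u ↦ 1 - (u + j) * θ) (fun u _ ↦ ih u) ?_ ?_
    · intro u hu
      have : (b : ℝ) ≤ u + j := by exact_mod_cast (by lia)
      nlinarith
    · have := ((hasSum_negBinomialWeight (m + 1)).mul_right (1 - j * θ)).sub
        ((hasSum_negBinomialWeight_mul_cast (m + 1)).mul_right θ)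
      rw [show 1 - (m + (j + 1 : ℕ)) * θ = 1 * (1 - j * θ) - (m + 1 : ℕ) * θ by push_cast; ring]
      exact this.congr_fun fun u ↦ by ring

theorem sub_div_le_survivalWeight_zero (hN : 2 * b ^ 2 ≤ N + 1) (m : ℕ) :
    ((b : ℝ) - m) / (2 * b) ≤ survivalWeight b N 0 m := by
  rcases le_or_gt b m with hm | hm
  · have : (b : ℝ) ≤ m := by exact_mod_cast hm
    exact (div_nonpos_of_nonpos_of_nonneg (by linarith) (by positivity)).trans
      (survivalWeight_nonneg b N 0 m)
  have hm' : (m : ℝ) + 1 ≤ b := by exact_mod_cast hm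
  have hb : (0 : ℝ) < b := by linarith [m.cast_nonneg (α := ℝ)]
  refine le_trans ?_ (one_sub_mul_le_survivalWeight (by lia) hN 0 m)
  rw [← sub_nonneg]
  calc (0 : ℝ) ≤ (b * (b - m) - m) / (2 * b ^ 2) := by
        apply div_nonneg _ (by positivity)
        nlinarith
    _ = 1 - (m + (0 : ℕ)) * (1 / b + 1 / (2 * b ^ 2)) - (b - m) / (2 * b) := by
        push_cast
        field

theorem one_sub_pow_mul_one_add_le_one {x : ℝ} (hx0 : 0 ≤ x) (hx1 : x ≤ 1) (n : ℕ) :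
    (1 - x) ^ n * (1 + n * x) ≤ 1 := by
  calc (1 - x) ^ n * (1 + n * x) ≤ (1 - x) ^ n * (1 + x) ^ n := by
        have : 0 ≤ (1 - x) ^ n := pow_nonneg (by linarith) n
        gcongr
        exact one_add_mul_le_pow (by linarith) n
    _ = (1 - x ^ 2) ^ n := by
        rw [← mul_pow]
        ring
    _ ≤ 1 := pow_le_one₀ (by nlinarith) (by nlinarith)

/-- Powers of `t = 1 - x` are subharmonic for the process with immigration once the population
exceeds `1 / x`. -/
theorem one_sub_pow_le_pow_succ {x : ℝ} (hx0 : 0 ≤ x) (hx1 : x ≤ 1) (hm : 1 ≤ m * x) :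
    (1 - x) ^ m ≤ (1 / (2 - (1 - x))) ^ (m + 1) := by
  have hx2 : 0 ≤ (1 - x ^ 2) ^ m := pow_nonneg (by nlinarith) m
  rw [show 2 - (1 - x) = 1 + x by ring, one_div_pow, le_div_iff₀ (by positivity)]
  calc (1 - x) ^ m * (1 + x) ^ (m + 1) = (1 - x ^ 2) ^ m * (1 + x) := by
        rw [pow_succ, ← mul_assoc, ← mul_pow]
        ring
    _ ≤ (1 - x ^ 2) ^ m * (1 + m * x ^ 2) := by
        gcongr
        nlinarith
    _ ≤ 1 := one_sub_pow_mul_one_add_le_one (by positivity) (by nlinarith) m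

theorem pow_sub_pow_le_survivalWeight_zero (hb : 8 ≤ b) (hN : 2 * b ^ 2 ≤ N + 1) (hm : m ≤ b) :
    1 / 8 * (1 - 4 / b : ℝ) ^ m - 1 / 8 * (1 - 4 / b) ^ b ≤ survivalWeight b N 0 m := by
  have hb' : (8 : ℝ) ≤ b := by exact_mod_cast hb
  have : (m : ℝ) ≤ b := by exact_mod_cast hm
  have ht0 : 0 ≤ (1 - 4 / b : ℝ) := by
    rw [sub_nonneg]
    exact div_le_one_of_le₀ (by linarith) (by linarith)
  have ht1 : (1 - 4 / b : ℝ) ≤ 1 := sub_le_self _ (by positivity)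
  set t : ℝ := 1 - 4 / b
  have bernoulli : 1 + (b - m : ℕ) * (-(4 / b : ℝ)) ≤ t ^ (b - m) :=
    one_add_mul_le_pow (by linarith) (b - m)
  rw [Nat.cast_sub hm] at bernoulli
  calc 1 / 8 * t ^ m - 1 / 8 * t ^ b = 1 / 8 * (t ^ m * (1 - t ^ (b - m))) := by
        rw [mul_one_sub, pow_mul_pow_sub t hm]
        ring
    _ ≤ 1 / 8 * (1 * ((b - m) * (4 / b))) := by
        have : t ^ (b - m) ≤ 1 := pow_le_one₀ ht0 ht1
        gcongr
        · exact pow_le_one₀ ht0 ht1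
        · linarith
    _ = (b - m) / (2 * b) := by field
    _ ≤ survivalWeight b N 0 m := sub_div_le_survivalWeight_zero hN m

theorem pow_sub_pow_le_survivalWeight (hb : 8 ≤ b) (hN : 2 * b ^ 2 ≤ N + 1) {j : ℕ}
    (hj : 2 * j ≤ b) (m : ℕ) :
    1 / 8 * (1 - 4 / b : ℝ) ^ m - 1 / 8 * (1 - 4 / b) ^ b ≤ survivalWeight b (N + j) j m := by
  have hb' : (8 : ℝ) ≤ b := by exact_mod_cast hb
  have hx : (4 / b : ℝ) ≤ 1 := div_le_one_of_le₀ (by linarith) (by linarith)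
  have ht0 : (0 : ℝ) ≤ 1 - 4 / b := by linarith
  have ht1 : (1 - 4 / b : ℝ) ≤ 1 := sub_le_self _ (by positivity)
  have nonpos_of_le (u : ℕ) (hu : b ≤ u) :
      1 / 8 * (1 - 4 / b : ℝ) ^ u - 1 / 8 * (1 - 4 / b) ^ b ≤ 0 := by
    linarith [pow_le_pow_of_le_one ht0 ht1 hu]
  induction j generalizing m with
  | zero =>
    rcases le_or_gt b m with hm | hm
    · exact (nonpos_of_le m hm).trans (survivalWeight_nonneg _ _ _ _)
    · exact pow_sub_pow_le_survivalWeight_zero hb hN hm.le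
  | succ j ih =>
    rcases le_or_gt b (4 * m) with hm | hm
    · have hm' : 1 ≤ m * (4 / b : ℝ) := by
        rw [mul_div_assoc', le_div_iff₀ (by linarith), one_mul, mul_comm]
        exact_mod_cast hm
      rw [← add_assoc, survivalWeight_succ_succ]
      grw [one_sub_pow_le_pow_succ (by positivity) hx hm']
      refine le_sum_negBinomialWeight_mul (fun u _ ↦ ih (by lia) u) nonpos_of_le ?_
      have := ((hasSum_negBinomialWeight_mul_pow (m + 1) ht0 ht1).mul_left (1 / 8)).sub
        ((hasSum_negBinomialWeight (m + 1)).mul_right (1 / 8 * (1 - 4 / b : ℝ) ^ b))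
      rw [one_mul] at this
      exact this.congr_fun fun u ↦ by ring
    · have hmj : (4 : ℝ) * (m + (j + 1 : ℕ)) ≤ 3 * b := by exact_mod_cast (by lia)
      calc 1 / 8 * (1 - 4 / b : ℝ) ^ m - 1 / 8 * (1 - 4 / b) ^ b ≤ 1 / 8 := by
            linarith [pow_nonneg ht0 b, pow_le_one₀ ht0 ht1 (n := m)]
        _ ≤ 1 - 3 / 4 * (1 + 1 / (2 * 8)) := by norm_num
        _ ≤ 1 - 3 / 4 * (1 + 1 / (2 * b)) := by gcongr
        _ = 1 - 3 * b / 4 * (1 / b + 1 / (2 * b ^ 2)) := by field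
        _ ≤ 1 - (m + (j + 1 : ℕ)) * (1 / b + 1 / (2 * b ^ 2)) := by gcongr; linarith
        _ ≤ survivalWeight b (N + (j + 1)) (j + 1) m :=
            one_sub_mul_le_survivalWeight (by lia) hN (j + 1) m

theorem exp_neg_eight_le_pow (hb : 8 ≤ b) : Real.exp (-8) ≤ (1 - 4 / b : ℝ) ^ b := by
  have hb' : (8 : ℝ) ≤ b := by exact_mod_cast hb
  have hx : (4 / b : ℝ) ≤ 1 / 2 := by rw [div_le_iff₀ (by linarith)]; linarith
  have hx0 : (0 : ℝ) ≤ 4 / b := by positivity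
  have exp_le : Real.exp (-(8 / b)) ≤ 1 - 4 / b := by
    rw [Real.exp_neg, inv_le_iff_one_le_mul₀ (Real.exp_pos _)]
    calc 1 ≤ (1 - 4 / b : ℝ) * (8 / b + 1) := by
          rw [show (8 / b : ℝ) = 2 * (4 / b) by ring]
          nlinarith
      _ ≤ (1 - 4 / b) * Real.exp (8 / b) := by
          gcongr
          · linarith
          · exact Real.add_one_le_exp _
  calc Real.exp (-8) = Real.exp (-(8 / b)) ^ b := by
        rw [← Real.exp_nat_mul]
        congr 1
        field
    _ ≤ (1 - 4 / b : ℝ) ^ b := by gcongr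

theorem exp_mul_div_le_survivalWeight (hb : 8 ≤ b) (hN : 2 * b ^ 2 ≤ N + 1) (hj : 2 * j ≤ b)
    (hq : 8 * q ≤ b) (hm : m + 2 * q ≤ b) :
    Real.exp (-8) * (q / (2 * b)) ≤ survivalWeight b (N + j) j m := by
  have hb' : (8 : ℝ) ≤ b := by exact_mod_cast hb
  have hq' : 2 * (q * (4 / b : ℝ)) ≤ 1 := by
    rw [mul_div_assoc', mul_div_assoc', div_le_one (by linarith)]
    exact_mod_cast (by lia)
  have hx : (4 / b : ℝ) ≤ 1 := div_le_one_of_le₀ (by linarith) (by linarith)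
  set t : ℝ := 1 - 4 / b
  have ht0 : 0 ≤ t := by linarith
  have ht1 : t ≤ 1 := sub_le_self _ (by positivity)
  have le_one_sub : q * (4 / b : ℝ) ≤ 1 - t ^ (2 * q) := by
    have := one_sub_pow_mul_one_add_le_one (x := (4 / b : ℝ)) (by positivity) hx (2 * q)
    have hx0 : 0 ≤ q * (4 / b : ℝ) := by positivity
    have : 0 ≤ t ^ (2 * q) := by positivity
    push_cast at *
    by_contra! hlt
    nlinarith
  calc Real.exp (-8) * (q / (2 * b)) = 1 / 8 * (Real.exp (-8) * (q * (4 / b))) := by ring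
    _ ≤ 1 / 8 * (t ^ m * (1 - t ^ (2 * q))) := by
        gcongr
        exact (exp_neg_eight_le_pow hb).trans (pow_le_pow_of_le_one ht0 ht1 (by lia))
    _ = 1 / 8 * t ^ m - 1 / 8 * t ^ (m + 2 * q) := by ring
    _ ≤ 1 / 8 * t ^ m - 1 / 8 * t ^ b := by
        gcongr 1 / 8 * t ^ m - 1 / 8 * ?_
        exact pow_le_pow_of_le_one ht0 ht1 hm
    _ ≤ survivalWeight b (N + j) j m := pow_sub_pow_le_survivalWeight hb hN hj m

end Survival

/-! ### Sums over chains -/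

/-- The sequence `m, f 0, f 1, …`. -/
def prepend (m : ℕ) (f : ℕ → ℕ) : ℕ → ℕ
  | 0 => m
  | k + 1 => f k

@[simp]
theorem prepend_zero (m : ℕ) (f : ℕ → ℕ) : prepend m f 0 = m := rfl

theorem prepend_inj {m n : ℕ} {f g : ℕ → ℕ} : prepend m f = prepend n g ↔ m = n ∧ f = g :=
  ⟨fun h ↦ ⟨congrFun h 0, funext fun k ↦ congrFun h (k + 1)⟩, fun ⟨hm, hf⟩ ↦ hm ▸ hf ▸ rfl⟩

/-- The probability that `N` generations of the critical geometric branching process with one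
immigrant in each of the first `j` generations follow the sequence `u`, given `u 0`. -/
noncomputable def chainWeight (j N : ℕ) (u : ℕ → ℕ) : ℝ≥0∞ :=
  ∏ k ∈ Finset.range N,
    ENNReal.ofReal (negBinomialWeight (u k + if k < j then 1 else 0) (u (k + 1)))

theorem chainWeight_prepend (j N m : ℕ) (f : ℕ → ℕ) :
    chainWeight j (N + 1) (prepend m f) =
      ENNReal.ofReal (negBinomialWeight (m + if 0 < j then 1 else 0) (f 0)) *
        chainWeight (j - 1) N f := by
  rw [chainWeight, Finset.prod_range_succ', mul_comm]
  simp only [chainWeight, Nat.lt_sub_iff_add_lt]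
  rfl

/-- The sequences that start in `I`, stay below `b` afterwards and vanish from time `N` on. -/
def chains (b N : ℕ) (I : Finset ℕ) : Set (ℕ → ℕ) :=
  {u | u 0 ∈ I ∧ (∀ k, u (k + 1) < b) ∧ ∀ k, N ≤ k → u k = 0}

theorem prepend_mem_chains {b N m : ℕ} {I : Finset ℕ} (hm : m ∈ I) {f : ℕ → ℕ}
    (hf : f ∈ chains b N (Finset.range b)) : prepend m f ∈ chains b (N + 1) I := by
  obtain ⟨h₀, hlt, hzero⟩ := hf
  refine ⟨hm, ?_, ?_⟩
  · rintro (_ | k)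
    exacts [Finset.mem_range.mp h₀, hlt k]
  · rintro (_ | k) hk
    exacts [absurd hk (by lia), hzero k (by lia)]

theorem sum_mul_survivalWeight_le_tsum_chainWeight {b : ℕ} (hb : 0 < b) (N j : ℕ) (I : Finset ℕ)
    (g : ℕ → ℝ≥0∞) :
    ∑ m ∈ I, g m * ENNReal.ofReal (survivalWeight b N j m) ≤
      ∑' u : chains b N I, g (u.1 0) * chainWeight j N u := by
  induction N generalizing j I g with
  | zero =>
    by_cases h₀ : 0 ∈ I
    · refine le_trans ?_ (ENNReal.le_tsum (⟨0, h₀, fun _ ↦ hb, fun _ _ ↦ rfl⟩ : chains b 0 I))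
      simp [survivalWeight, chainWeight, apply_ite ENNReal.ofReal, h₀]
    · simp [survivalWeight, apply_ite ENNReal.ofReal, h₀]
  | succ N ih =>
    have hinj : Function.Injective fun t : I × chains b N (Finset.range b) ↦
        (⟨prepend t.1 t.2, prepend_mem_chains t.1.2 t.2.2⟩ : chains b (N + 1) I) := by
      rintro ⟨m, f⟩ ⟨n, f'⟩ h
      obtain ⟨hm, hf⟩ := prepend_inj.mp (Subtype.ext_iff.mp h)
      exact Prod.ext (Subtype.ext hm) (Subtype.ext hf)
    refine le_trans ?_ (ENNReal.tsum_comp_le_tsum_of_injective hinj _)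
    rw [ENNReal.tsum_prod', ← Finset.tsum_subtype]
    refine ENNReal.tsum_le_tsum fun m ↦ ?_
    simp only [chainWeight_prepend]
    change _ ≤ ∑' f : chains b N (Finset.range b), g m * _
    rw [ENNReal.tsum_mul_left]
    gcongr
    refine le_trans ?_ (ih (j - 1) (Finset.range b) fun u ↦
      ENNReal.ofReal (negBinomialWeight (m + if 0 < j then 1 else 0) u))
    rw [survivalWeight, ENNReal.ofReal_sum_of_nonneg fun u _ ↦
      mul_nonneg (negBinomialWeight_nonneg _ _) (survivalWeight_nonneg _ _ _ _)]
    simp only [ENNReal.ofReal_mul (negBinomialWeight_nonneg _ _)]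
    rfl

theorem ofReal_le_tsum_chainWeight_prepend {b N j a c : ℕ} (hb : 0 < b) {I : Finset ℕ} {p r : ℝ}
    (hp : 0 ≤ p)
    (ha : p ≤ negBinomialWeight (a + if 0 < j then 1 else 0) c)
    (hc : ∀ m ∈ I, p ≤ negBinomialWeight (c + if 0 < j - 1 then 1 else 0) m)
    (hI : ∀ m ∈ I, r ≤ survivalWeight b N (j - 2) m) :
    ENNReal.ofReal (p * (I.card * (p * r))) ≤
      ∑' f : chains b N I, chainWeight j (N + 2) (prepend a (prepend c f)) := by
  simp only [chainWeight_prepend, prepend_zero, Nat.sub_sub, ENNReal.tsum_mul_left]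
  rw [ENNReal.ofReal_mul hp]
  refine mul_le_mul' (ENNReal.ofReal_le_ofReal ha) ?_
  calc ENNReal.ofReal (I.card * (p * r)) = ∑ _ ∈ I, ENNReal.ofReal p * ENNReal.ofReal r := by
        rw [Finset.sum_const, nsmul_eq_mul, ENNReal.ofReal_mul (by positivity),
          ENNReal.ofReal_mul hp, ENNReal.ofReal_natCast]
    _ ≤ ∑ m ∈ I, ENNReal.ofReal (negBinomialWeight (c + if 0 < j - 1 then 1 else 0) m) *
          ENNReal.ofReal (survivalWeight b N (j - 2) m) := by
        gcongr with _ hm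
        exacts [hc _ hm, hI _ hm]
    _ ≤ _ := sum_mul_survivalWeight_le_tsum_chainWeight hb N (j - 2) I fun m ↦
          ENNReal.ofReal (negBinomialWeight (c + if 0 < j - 1 then 1 else 0) m)

/-! ### The lower bound -/

section LowerBound

theorem siteWeight_of_lt_eq_ofReal {y z : ℤ} (h : y < z) (A B : ℕ) :
    siteWeight y z A B = ENNReal.ofReal (negBinomialWeight A B) := by
  rw [siteWeight_of_lt h, negBinomialWeight, mul_comm, ENNReal.ofReal_mul (by positivity),
    ENNReal.ofReal_natCast, ENNReal.ofReal_pow (by positivity), one_div,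
    ENNReal.ofReal_inv_of_pos two_pos, ENNReal.ofReal_ofNat]

theorem siteWeight_of_gt_eq_ofReal {y z : ℤ} (h : z < y) (A B : ℕ) :
    siteWeight y z A B = ENNReal.ofReal (negBinomialWeight B A) := by
  rw [siteWeight_of_gt h, negBinomialWeight, mul_comm, ENNReal.ofReal_mul (by positivity),
    ENNReal.ofReal_natCast, ENNReal.ofReal_pow (by positivity), one_div,
    ENNReal.ofReal_inv_of_pos two_pos, ENNReal.ofReal_ofNat, add_comm A B]

theorem siteWeight_self_eq_ofReal (y : ℤ) (A B : ℕ) :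
    siteWeight y y A B = ENNReal.ofReal (binomialWeight (A + B) A) := by
  rw [siteWeight_self, binomialWeight, mul_comm, ENNReal.ofReal_mul (by positivity),
    ENNReal.ofReal_natCast, ENNReal.ofReal_pow (by positivity), one_div,
    ENNReal.ofReal_inv_of_pos two_pos, ENNReal.ofReal_ofNat]

theorem prod_Icc_sub_add_eq {M : Type*} [CommMonoid M] (y : ℤ) (F : ℤ → M) (n : ℕ) :
    ∏ z ∈ Finset.Icc (y - n) (y + n), F z =
      F y * (∏ k ∈ Finset.range n, F (y + k + 1)) * ∏ k ∈ Finset.range n, F (y - k - 1) := by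
  induction n with
  | zero => simp
  | succ n ih =>
    have hIcc : Finset.Icc (y - (n + 1 : ℕ)) (y + (n + 1 : ℕ)) =
        insert (y + n + 1) (insert (y - n - 1) (Finset.Icc (y - n) (y + n))) := by
      ext z
      simp only [Finset.mem_Icc, Finset.mem_insert]
      lia
    rw [hIcc, Finset.prod_insert (by grind), Finset.prod_insert (by grind), ih,
      Finset.prod_range_succ, Finset.prod_range_succ]
    ac_rfl

namespace Profile

/-- The profile of a path from `s` to `y ≥ s` that has `u k` up steps from `y + k` to `y + k + 1`
and `v k` down steps from `y - k` to `y - k - 1`; the other counts are forced. -/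
def ofSides (s y : ℤ) (u v : ℕ → ℕ) : Profile where
  endpoint := y
  down z := if y < z then u (z - y - 1).toNat else v (y - z).toNat
  up z := if y ≤ z then u (z - y).toNat else v (y - z - 1).toNat + if s ≤ z then 1 else 0

variable {s y : ℤ} {u v : ℕ → ℕ}

theorem down_ofSides_add (s y : ℤ) (u v : ℕ → ℕ) (k : ℕ) :
    (ofSides s y u v).down (y + k + 1) = u k := by
  grind [ofSides]

theorem down_ofSides_sub (s y : ℤ) (u v : ℕ → ℕ) (k : ℕ) :
    (ofSides s y u v).down (y - k) = v k := by
  grind [ofSides]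

theorem up_ofSides_add (s y : ℤ) (u v : ℕ → ℕ) (k : ℕ) :
    (ofSides s y u v).up (y + k) = u k := by
  grind [ofSides]

theorem up_ofSides_sub (s y : ℤ) (u v : ℕ → ℕ) (k : ℕ) :
    (ofSides s y u v).up (y - k - 1) = v k + if s ≤ y - k - 1 then 1 else 0 := by
  grind [ofSides]

theorem isFlow_ofSides (hs : s ≤ y) (u v : ℕ → ℕ) : (ofSides s y u v).IsFlow s := by
  intro z
  grind [ofSides]

theorem ofSides_inj {y' : ℤ} {u' v' : ℕ → ℕ} :
    ofSides s y u v = ofSides s y' u' v' ↔ y = y' ∧ u = u' ∧ v = v' := by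
  refine ⟨fun h ↦ ?_, by grind⟩
  obtain rfl : y = y' := congrArg endpoint h
  refine ⟨rfl, funext fun k ↦ ?_, funext fun k ↦ ?_⟩
  · rw [← down_ofSides_add s y u v, h, down_ofSides_add]
  · rw [← down_ofSides_sub s y u v, h, down_ofSides_sub]

theorem visits_ofSides_self (hs : s < y) (u v : ℕ → ℕ) :
    (ofSides s y u v).visits y = u 0 + v 0 + 1 := by
  simp only [visits, ofSides]
  grind

theorem visits_ofSides_add (s y : ℤ) (u v : ℕ → ℕ) (k : ℕ) :
    (ofSides s y u v).visits (y + k + 1) = u k + u (k + 1) := by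
  simp only [visits, ofSides]
  grind

theorem visits_ofSides_sub (s y : ℤ) (u v : ℕ → ℕ) (k : ℕ) :
    (ofSides s y u v).visits (y - k - 1) =
      v k + v (k + 1) + if s ≤ y - k - 2 then 1 else 0 := by
  simp only [visits, ofSides]
  grind

end Profile

open Profile

theorem pathMass_ofSides (s : ℤ) {i N : ℕ} (hi : i ≤ N) {u v : ℕ → ℕ}
    (hu : ∀ k, N ≤ k → u k = 0) (hv : ∀ k, N ≤ k → v k = 0) :
    pathMass s (ofSides s (s + i) u v) =
      ENNReal.ofReal (binomialWeight (v 0 + u 0) (v 0)) * chainWeight 0 N u *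
        chainWeight i N v := by
  have hJ : ∀ z ∉ Finset.Icc (s + i - N : ℤ) (s + i + N),
      (ofSides s (s + i) u v).down z = 0 ∧ (ofSides s (s + i) u v).up z = 0 := by
    grind [ofSides]
  rw [pathMass_eq_prod (isFlow_ofSides (by lia) u v) hJ, prod_Icc_sub_add_eq]
  have hzero : siteWeight (s + i) (s + i) ((ofSides s (s + i) u v).down (s + i))
      ((ofSides s (s + i) u v).up (s + i)) = ENNReal.ofReal (binomialWeight (v 0 + u 0) (v 0)) := by
    rw [siteWeight_self_eq_ofReal]
    simp [ofSides]
  have hright (k : ℕ) : siteWeight (s + i) (s + i + k + 1)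
      ((ofSides s (s + i) u v).down (s + i + k + 1)) ((ofSides s (s + i) u v).up (s + i + k + 1)) =
      ENNReal.ofReal (negBinomialWeight (u k) (u (k + 1))) := by
    rw [siteWeight_of_lt_eq_ofReal (by lia), down_ofSides_add, add_assoc, ← Nat.cast_succ,
      up_ofSides_add]
  have hleft (k : ℕ) : siteWeight (s + i) (s + i - k - 1)
      ((ofSides s (s + i) u v).down (s + i - k - 1)) ((ofSides s (s + i) u v).up (s + i - k - 1)) =
      ENNReal.ofReal (negBinomialWeight (v k + if k < i then 1 else 0) (v (k + 1))) := by
    rw [siteWeight_of_gt_eq_ofReal (by lia), up_ofSides_sub, sub_sub, ← Nat.cast_succ,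
      down_ofSides_sub]
    grind
  simp only [show (ofSides s (s + i) u v).endpoint = s + i from rfl, hzero, hright, hleft,
    chainWeight, Nat.not_lt_zero, if_false, add_zero]

theorem isTopTriple_ofSides {l : ℤ → ℕ} {s y : ℤ} {u v : ℕ → ℕ} {b h M : ℕ} (hy : s + 2 ≤ y)
    (hM : ∀ z, l z ≤ M) (hl : ∀ z, y - 2 ≤ z → l z = 0) (hb : 2 * b + M ≤ h)
    (hu : ∀ k, u (k + 2) < b) (hv : ∀ k, v (k + 2) < b) (h₀ : u 0 + v 0 + 1 = h)
    (hu₁ : u 0 + u 1 = h) (hv₁ : v 0 + v 1 + 1 = h) (hu₂ : u 1 + u 2 < h)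
    (hv₂ : v 1 + v 2 + 1 < h) :
    IsTopTriple h y (l + (ofSides s y u v).visits) := by
  have hright (k : ℕ) : (l + (ofSides s y u v).visits) (y + k + 1) = u k + u (k + 1) := by
    rw [Pi.add_apply, hl _ (by lia), visits_ofSides_add, zero_add]
  have hself : (l + (ofSides s y u v).visits) y = h := by
    rw [Pi.add_apply, hl _ (by lia), visits_ofSides_self (by lia), zero_add, h₀]
  have hleft (k : ℕ) : (l + (ofSides s y u v).visits) (y - k - 1) =
      l (y - k - 1) + (v k + v (k + 1) + if s ≤ y - k - 2 then 1 else 0) := by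
    rw [Pi.add_apply, visits_ofSides_sub]
  constructor
  · rintro z ⟨hz, hz'⟩
    obtain rfl | rfl | rfl : z = y - 1 ∨ z = y ∨ z = y + 1 := by lia
    · have := hleft 0
      grind
    · exact hself
    · have := hright 0
      grind
  · intro z hz
    rw [Set.mem_Icc, not_and_or, not_le, not_le] at hz
    rcases hz with hz | hz
    · obtain ⟨k, rfl⟩ : ∃ k : ℕ, z = y - (k + 1 : ℕ) - 1 := ⟨(y - z - 2).toNat, by lia⟩
      have := hM (y - (k + 1 : ℕ) - 1)
      rw [hleft]
      rcases k with _ | k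
      · grind
      · grind [hv k, hv (k + 1)]
    · obtain ⟨k, rfl⟩ : ∃ k : ℕ, z = y + (k + 1 : ℕ) + 1 := ⟨(z - y - 2).toNat, by lia⟩
      rw [hright]
      rcases k with _ | k
      · exact hu₂
      · grind [hu k, hu (k + 1)]

/-- The sequences of edge counts allowed at distance at least two from the endpoint of a path that
creates a top triple at height `h`; the scale `q` is of order `√h`. -/
def tails (h q : ℕ) : Set (ℕ → ℕ) :=
  chains (h / 2 - q) (h ^ 2) (Finset.Icc (h / 2 - 4 * q) (h / 2 - 3 * q))

/-- The profile of a path from `s` to `s + j + 2` with `x` up steps from its endpoint whose edge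
counts next to the endpoint are adjusted to give the endpoint and its neighbours `h` visits each,
and whose remaining edge counts are `f` on the right and `g` on the left. -/
def tripleProfile (s : ℤ) (h : ℕ) (t : ℕ × ℕ) (f g : ℕ → ℕ) : Profile :=
  ofSides s (s + (t.1 + 2 : ℕ)) (prepend t.2 (prepend (h - t.2) f))
    (prepend (h - 1 - t.2) (prepend t.2 g))

theorem tripleProfile_inj {s : ℤ} {h : ℕ} {t t' : ℕ × ℕ} {f f' g g' : ℕ → ℕ} :
    tripleProfile s h t f g = tripleProfile s h t' f' g' ↔ t = t' ∧ f = f' ∧ g = g' := by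
  simp only [tripleProfile, ofSides_inj, prepend_inj, Prod.ext_iff]
  grind

section

variable {s : ℤ} {h q : ℕ} {t : ℕ × ℕ} {f g : ℕ → ℕ}

theorem lt_of_mem_tails (hq : 1 ≤ q) (h400 : 400 * q ^ 2 ≤ h) (hf : f ∈ tails h q) (k : ℕ) :
    f k < h / 2 - q := by
  obtain ⟨hf₀, hlt, -⟩ := hf
  rcases k with _ | k
  · have := (Finset.mem_Icc.mp hf₀).2
    have : q ≤ q ^ 2 := Nat.le_self_pow two_ne_zero q
    lia
  · exact hlt k

theorem isTopTriple_tripleProfile {l : ℤ → ℕ} {M : ℕ} (hq : 1 ≤ q) (h400 : 400 * q ^ 2 ≤ h)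
    (ht : t.2 ∈ Finset.Icc (h / 2 - q) (h / 2 + q)) (hf : f ∈ tails h q) (hg : g ∈ tails h q)
    (hM : ∀ z, l z ≤ M) (hl : ∀ z, s + t.1 ≤ z → l z = 0) (hMq : M ≤ 2 * q) :
    IsTopTriple h (tripleProfile s h t f g).endpoint (l + (tripleProfile s h t f g).visits) := by
  have : q ≤ q ^ 2 := Nat.le_self_pow two_ne_zero q
  obtain ⟨hx, hx'⟩ := Finset.mem_Icc.mp ht
  have hf₀ := Finset.mem_Icc.mp hf.1
  have hg₀ := Finset.mem_Icc.mp hg.1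
  refine isTopTriple_ofSides (y := s + (t.1 + 2 : ℕ)) (b := h / 2 - q) (by lia) hM
    (fun z hz ↦ hl z (by lia)) (by lia) (lt_of_mem_tails hq h400 hf)
    (lt_of_mem_tails hq h400 hg) ?_ ?_ ?_ ?_ ?_ <;>
  simp only [prepend] <;> lia

theorem pathMass_tripleProfile (ht : t.1 ≤ h) (hx : t.2 < h) (hf : f ∈ tails h q)
    (hg : g ∈ tails h q) :
    pathMass s (tripleProfile s h t f g) =
      ENNReal.ofReal (binomialWeight (h - 1) (h - 1 - t.2)) *
        chainWeight 0 (h ^ 2 + 2) (prepend t.2 (prepend (h - t.2) f)) *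
        chainWeight (t.1 + 2) (h ^ 2 + 2) (prepend (h - 1 - t.2) (prepend t.2 g)) := by
  have prepend_eq_zero {a c : ℕ} {f : ℕ → ℕ} (hf : f ∈ tails h q) (k : ℕ) (hk : h ^ 2 + 2 ≤ k) :
      prepend a (prepend c f) k = 0 := by
    obtain ⟨k, rfl⟩ := Nat.exists_eq_add_of_le' (le_of_add_le_right hk)
    exact hf.2.2 k (by lia)
  have : h ≤ h ^ 2 := Nat.le_self_pow two_ne_zero h
  rw [tripleProfile, pathMass_ofSides s (by lia) (prepend_eq_zero hf) (prepend_eq_zero hg),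
    prepend_zero, prepend_zero, Nat.sub_add_cancel (by lia)]

theorem exp_div_le_tsum_chainWeight {i a c : ℕ} (hq : 1 ≤ q) (h400 : 400 * q ^ 2 ≤ h)
    (hi : 8 * (i - 2) ≤ h)
    (ha : 1 / (240 * q : ℝ) ≤ negBinomialWeight (a + if 0 < i then 1 else 0) c)
    (hc : ∀ m ∈ Finset.Icc (h / 2 - 4 * q) (h / 2 - 3 * q),
      1 / (240 * q : ℝ) ≤ negBinomialWeight (c + if 0 < i - 1 then 1 else 0) m) :
    ENNReal.ofReal (Real.exp (-8) / (240 ^ 2 * h)) ≤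
      ∑' f : tails h q, chainWeight i (h ^ 2 + 2) (prepend a (prepend c f)) := by
  have : q ≤ q ^ 2 := Nat.le_self_pow two_ne_zero q
  set b := h / 2 - q
  set I := Finset.Icc (h / 2 - 4 * q) (h / 2 - 3 * q)
  have hb0 : 0 < b := by lia
  have hlength : 2 * b ^ 2 + (i - 2) ≤ h ^ 2 := by
    have : (2 * b) ^ 2 ≤ h ^ 2 := Nat.pow_le_pow_left (by lia) 2
    nlinarith
  have hsurvival (m : ℕ) (hm : m ∈ I) :
      Real.exp (-8) * (q / h) ≤ survivalWeight b (h ^ 2) (i - 2) m := by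
    have hm' := Finset.mem_Icc.mp hm
    obtain ⟨N, hN⟩ := Nat.exists_eq_add_of_le' (le_of_add_le_right hlength)
    have hbh : (2 * b : ℝ) ≤ h := by exact_mod_cast (by lia : 2 * b ≤ h)
    rw [hN]
    refine le_trans ?_ (exp_mul_div_le_survivalWeight (q := q) (by lia) (by lia) (by lia) (by lia)
      (by lia))
    gcongr
  have hcard : (q : ℝ) ≤ I.card := by
    rw [Nat.card_Icc]
    exact_mod_cast (by lia : q ≤ h / 2 - 3 * q + 1 - (h / 2 - 4 * q))
  refine le_trans (ENNReal.ofReal_le_ofReal ?_)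
    (ofReal_le_tsum_chainWeight_prepend hb0 (by positivity) ha hc hsurvival)
  calc Real.exp (-8) / (240 ^ 2 * h)
      = 1 / (240 * q) * (q * (1 / (240 * q) * (Real.exp (-8) * (q / h)))) := by field
    _ ≤ _ := by gcongr

theorem le_tsum_pathMass_tripleProfile (hq : 1 ≤ q) (h400 : 400 * q ^ 2 ≤ h)
    (h1600 : h ≤ 1600 * q ^ 2) (ht : 8 * t.1 ≤ h)
    (hx : t.2 ∈ Finset.Icc (h / 2 - q) (h / 2 + q)) :
    ENNReal.ofReal (1 / (120 * q) * (Real.exp (-8) / (240 ^ 2 * h)) ^ 2) ≤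
      ∑' (f : tails h q) (g : tails h q), pathMass s (tripleProfile s h t f g) := by
  have : q ≤ q ^ 2 := Nat.le_self_pow two_ne_zero q
  obtain ⟨hx, hx'⟩ := Finset.mem_Icc.mp hx
  have hnb (m u : ℕ) (hm : h ≤ 2 * m + 2 * q + 2) (hm' : 2 * m ≤ h + 2 * q + 2)
      (hu : h ≤ 2 * u + 8 * q + 1) (hu' : 2 * u ≤ h + 4 * q) (hmu : m + u ≤ h) :
      1 / (240 * q : ℝ) ≤ negBinomialWeight m u := by
    refine one_div_le_negBinomialWeight hq ?_ ?_ ?_ ?_ ?_ <;> lia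
  have hright := exp_div_le_tsum_chainWeight (i := 0) (a := t.2) (c := h - t.2) hq h400 (by lia)
    (by apply hnb <;> grind) (fun m hm ↦ by rw [Finset.mem_Icc] at hm; apply hnb <;> grind)
  have hleft := exp_div_le_tsum_chainWeight (i := t.1 + 2) (a := h - 1 - t.2) (c := t.2) hq h400
    (by lia) (by apply hnb <;> grind)
    (fun m hm ↦ by rw [Finset.mem_Icc] at hm; apply hnb <;> grind)
  have hcenter : 1 / (120 * q : ℝ) ≤ binomialWeight (h - 1) (h - 1 - t.2) := by
    refine one_div_le_binomialWeight hq ?_ ?_ ?_ ?_ <;> lia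
  rw [ENNReal.ofReal_mul (by positivity), ENNReal.ofReal_pow (by positivity), sq, ← mul_assoc]
  calc _ ≤ ENNReal.ofReal (binomialWeight (h - 1) (h - 1 - t.2)) *
        (∑' f : tails h q, chainWeight 0 (h ^ 2 + 2) (prepend t.2 (prepend (h - t.2) f))) *
        ∑' g : tails h q, chainWeight (t.1 + 2) (h ^ 2 + 2)
          (prepend (h - 1 - t.2) (prepend t.2 g)) := by gcongr
    _ = _ := by
      rw [mul_assoc, ← ENNReal.tsum_mul_right, ← ENNReal.tsum_mul_left]
      refine tsum_congr fun f ↦ ?_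
      rw [← mul_assoc, ← ENNReal.tsum_mul_left]
      exact tsum_congr fun g ↦ (pathMass_tripleProfile (by lia) (by lia) f.2 g.2).symm

end

theorem exists_sq_scale {h : ℕ} (hh : 400 ≤ h) :
    ∃ q, 1 ≤ q ∧ 400 * q ^ 2 ≤ h ∧ h ≤ 1600 * q ^ 2 := by
  have hsqrt : 20 ≤ h.sqrt := Nat.le_sqrt'.mpr hh
  refine ⟨h.sqrt / 20, by lia, ?_, ?_⟩
  · calc 400 * (h.sqrt / 20) ^ 2 = (20 * (h.sqrt / 20)) ^ 2 := by ring
      _ ≤ h.sqrt ^ 2 := by gcongr; exact Nat.mul_div_le _ _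
      _ ≤ h := Nat.sqrt_le' h
  · calc h ≤ (h.sqrt + 1) ^ 2 := (Nat.lt_succ_sqrt' h).le
      _ ≤ (40 * (h.sqrt / 20)) ^ 2 := by gcongr; lia
      _ = 1600 * (h.sqrt / 20) ^ 2 := by ring

theorem sum_tsum_pathMass_le_mass_triplePaths {l : ℤ → ℕ} {s : ℤ} {M h q : ℕ} (hq : 1 ≤ q)
    (h400 : 400 * q ^ 2 ≤ h) (hMq : M ≤ 2 * q) (hM : ∀ z, l z ≤ M) {J : Finset ℕ}
    (hJ : ∀ j ∈ J, ∀ z, s + j ≤ z → l z = 0) :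
    ∑ t ∈ J ×ˢ Finset.Icc (h / 2 - q) (h / 2 + q),
      ∑' (f : tails h q) (g : tails h q), pathMass s (tripleProfile s h t f g) ≤
        mass (triplePaths l s h) := by
  set A := J ×ˢ Finset.Icc (h / 2 - q) (h / 2 + q)
  have hmem (t : A) (f g : tails h q) : tripleProfile s h t f g ∈
      {p : Profile | IsTopTriple h p.endpoint (l + p.visits)} :=
    isTopTriple_tripleProfile hq h400 (Finset.mem_product.mp t.2).2 f.2 g.2 hM
      (hJ _ (Finset.mem_product.mp t.2).1) hMq
  have hinj : Function.Injective fun x : A × tails h q × tails h q ↦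
      (⟨_, hmem x.1 x.2.1 x.2.2⟩ : {p : Profile | IsTopTriple h p.endpoint (l + p.visits)}) := by
    rintro ⟨t, f, g⟩ ⟨t', f', g'⟩ heq
    obtain ⟨ht, hf, hg⟩ := tripleProfile_inj.mp (Subtype.ext_iff.mp heq)
    exact Prod.ext (Subtype.ext ht) (Prod.ext (Subtype.ext hf) (Subtype.ext hg))
  rw [triplePaths, mass_preimage_eq_tsum]
  refine le_trans (le_of_eq ?_) (ENNReal.tsum_comp_le_tsum_of_injective hinj _)
  rw [ENNReal.tsum_prod', ← Finset.tsum_subtype]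
  exact tsum_congr fun t ↦ (ENNReal.tsum_prod' (f := fun x : tails h q × tails h q ↦
    pathMass s (tripleProfile s h t x.1 x.2))).symm

theorem exists_bound_of_finite_support {l : ℤ → ℕ} (hl : (Function.support l).Finite) :
    ∃ M : ℕ, ∀ z, l z ≠ 0 → l z ≤ M ∧ z ≤ M := by
  refine ⟨hl.toFinset.sup fun z ↦ l z + z.natAbs, fun z hz ↦ ?_⟩
  have := Finset.le_sup (f := fun z ↦ l z + z.natAbs) (hl.mem_toFinset.mpr hz)
  lia

theorem exists_div_le_mass_triplePaths : ∃ c : ℝ, 0 < c ∧ ∀ (l : ℤ → ℕ) (s : ℤ),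
    (Function.support l).Finite → ∃ h₀ : ℕ, ∀ h, h₀ ≤ h →
      ENNReal.ofReal (c / h) ≤ mass (triplePaths l s h) := by
  refine ⟨1 / 120 * (Real.exp (-8) / 240 ^ 2) ^ 2 / 16, by positivity, fun l s hl ↦ ?_⟩
  obtain ⟨M, hM⟩ := exists_bound_of_finite_support hl
  set j₀ := M + s.natAbs + 1
  refine ⟨16 * j₀ + 16 + 1600 * (M + 1) ^ 2, fun h hh ↦ ?_⟩
  obtain ⟨q, hq, h400, h1600⟩ := exists_sq_scale (h := h) (by grind [Nat.one_le_pow 2 (M + 1)])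
  have hMq : M + 1 ≤ q := (Nat.pow_le_pow_iff_left two_ne_zero).mp (by lia)
  set J := Finset.Ico j₀ (h / 8)
  set X := Finset.Icc (h / 2 - q) (h / 2 + q)
  have hcard : (h * q : ℝ) ≤ 16 * (J ×ˢ X).card := by
    have hJ : h ≤ 16 * J.card := by simp only [J, Nat.card_Ico]; lia
    have hX : q ≤ X.card := by simp only [X, Nat.card_Icc]; lia
    rw [Finset.card_product]
    exact_mod_cast (mul_assoc 16 J.card X.card) ▸ Nat.mul_le_mul hJ hX
  have hh0 : (0 : ℝ) < h := by exact_mod_cast (by lia : 0 < h)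
  calc ENNReal.ofReal (1 / 120 * (Real.exp (-8) / 240 ^ 2) ^ 2 / 16 / h)
      ≤ ENNReal.ofReal ((J ×ˢ X).card *
          (1 / (120 * q) * (Real.exp (-8) / (240 ^ 2 * h)) ^ 2)) := by
        refine ENNReal.ofReal_le_ofReal ?_
        calc 1 / 120 * (Real.exp (-8) / 240 ^ 2) ^ 2 / 16 / h
            = (h * q) / 16 * (1 / (120 * q) * (Real.exp (-8) / (240 ^ 2 * h)) ^ 2) := by field
          _ ≤ _ := by gcongr; linarith
    _ = ∑ t ∈ J ×ˢ X, ENNReal.ofReal (1 / (120 * q) * (Real.exp (-8) / (240 ^ 2 * h)) ^ 2) := by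
        rw [Finset.sum_const, nsmul_eq_mul, ENNReal.ofReal_mul (by positivity),
          ENNReal.ofReal_natCast]
    _ ≤ ∑ t ∈ J ×ˢ X, ∑' (f : tails h q) (g : tails h q), pathMass s (tripleProfile s h t f g) := by
        refine Finset.sum_le_sum fun t ht ↦ ?_
        obtain ⟨hj, hx⟩ := Finset.mem_product.mp ht
        exact le_tsum_pathMass_tripleProfile hq h400 h1600 (by grind) hx
    _ ≤ mass (triplePaths l s h) := by
        refine sum_tsum_pathMass_le_mass_triplePaths (M := M) hq h400 (by lia) ?_ ?_
        · grind
        · grind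

end LowerBound

/-! ### Minimal prefixes -/

/-- The words of `P` none of whose proper prefixes lies in `P`: the ways in which a sequence of
letters can enter `P` for the first time. -/
def minimalPrefixes (P : Set (List Bool)) : Set (List Bool) :=
  {w ∈ P | ∀ v ∈ P, v <+: w → v = w}

theorem isAntichain_minimalPrefixes (P : Set (List Bool)) :
    IsAntichain (· <+: ·) (minimalPrefixes P) :=
  fun _ hv _ hw hne h ↦ hne (hw.2 _ hv.1 h)

theorem exists_isPrefix_mem_minimalPrefixes {P : Set (List Bool)} {w : List Bool} (hw : w ∈ P) :
    ∃ v ∈ minimalPrefixes P, v <+: w := by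
  obtain ⟨v, ⟨hvP, hvw⟩, hmin⟩ := exists_minimalFor_of_wellFoundedLT
    (fun v : List Bool ↦ v ∈ P ∧ v <+: w) List.length ⟨w, hw, List.prefix_rfl⟩
  refine ⟨v, ⟨hvP, fun u hu huv ↦ ?_⟩, hvw⟩
  exact huv.eq_of_length_le (hmin ⟨hu, huv.trans hvw⟩ huv.length_le)

theorem mass_le_tsum_minimalPrefixes {P Q : Set (List Bool)} (hQ : Q ⊆ P) :
    mass Q ≤ ∑' w : minimalPrefixes P, weight w * mass {v | ↑w ++ v ∈ Q} := by
  have hcover : Q ⊆ ⋃ w : minimalPrefixes P, (↑w ++ ·) '' {v | ↑w ++ v ∈ Q} := by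
    intro w hw
    obtain ⟨v, hv, u, rfl⟩ := exists_isPrefix_mem_minimalPrefixes (hQ hw)
    exact Set.mem_iUnion.mpr ⟨⟨v, hv⟩, u, hw, rfl⟩
  calc mass Q ≤ mass (⋃ w : minimalPrefixes P, (↑w ++ ·) '' {v | ↑w ++ v ∈ Q}) := mass_mono hcover
    _ ≤ ∑' w : minimalPrefixes P, mass ((↑w ++ ·) '' {v | ↑w ++ v ∈ Q}) :=
        ENNReal.tsum_iUnion_le_tsum weight _
    _ = _ := by simp only [mass_image_append]

/-! ### The second moment method -/

section SecondMoment

variable {l : ℤ → ℕ} {s : ℤ} {h m A B : ℕ} {v w : List Bool}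

theorem append_mem_triplePaths : w ++ v ∈ triplePaths l s h ↔
    v ∈ triplePaths (l + (profile s w).visits) (profile s w).endpoint h := by
  simp only [triplePaths, Set.mem_preimage, Set.mem_ofPred_eq, endpoint_profile_append,
    visits_profile_append, add_assoc]

theorem IsTopTriple.apply_le {y : ℤ} {f : ℤ → ℕ} (hf : IsTopTriple h y f) (z : ℤ) : f z ≤ h := by
  by_cases hz : z ∈ Set.Icc (y - 1) (y + 1)
  · exact (hf.1 z hz).le
  · exact (hf.2 z hz).le

theorem eq_nil_of_append_mem_triplePaths (hw : w ∈ triplePaths l s h)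
    (hwv : w ++ v ∈ triplePaths l s h) : v = [] := by
  rw [append_mem_triplePaths] at hwv
  set f := l + (profile s w).visits
  set y := (profile s w).endpoint
  have htop : ∀ z ∈ Set.Icc (y - 1) (y + 1), z ∈ Set.Icc ((profile y v).endpoint - 1)
      ((profile y v).endpoint + 1) ∧ (profile y v).visits z = 0 := by
    intro z hz
    have hfz : f z = h := hw.1 z hz
    refine ⟨?_, ?_⟩
    · by_contra hz'
      have := hwv.2 z hz'
      simp only [Pi.add_apply] at this
      lia
    · have := hwv.apply_le z
      simp only [Pi.add_apply] at this
      lia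
  have hendpoint : (profile y v).endpoint = y := by
    have hleft := (htop (y - 1) (by simp; lia)).1
    have hright := (htop (y + 1) (by simp; lia)).1
    grind
  by_contra hv
  have := visits_profile_endpoint_pos y hv
  rw [hendpoint, (htop y (by simp)).2] at this
  exact this.false

theorem isAntichain_triplePaths : IsAntichain (· <+: ·) (triplePaths l s h) := by
  rintro v hv _ hw hne ⟨u, rfl⟩
  exact hne (by simp [eq_nil_of_append_mem_triplePaths hv hw])

theorem triplePaths_eq_empty {z : ℤ} (hz : h < l z) : triplePaths l s h = ∅ := by
  refine Set.eq_empty_of_forall_notMem fun w hw ↦ ?_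
  have := hw.apply_le z
  simp only [Pi.add_apply] at this
  lia

theorem mass_triplePaths_add_le {k : ℕ} (hk : k ≠ 0) (hm : ∀ z, l z ≤ m) :
    mass (triplePaths l s (k + m)) ≤ 640 * (k : ℝ≥0∞)⁻¹ := by
  rw [← div_eq_mul_inv, ENNReal.le_div_iff_mul_le (by simp [hk]) (by simp), mul_comm]
  exact mul_mass_triplePaths_le fun z ↦ by have := hm z; lia

theorem sum_mass_triplePaths_le (hm : IsGreatest (Set.range l) m) :
    ∑ h ∈ Finset.Ico A B, mass (triplePaths l s h) ≤
      1 + 640 * ∑ k ∈ Finset.Ico 1 B, (k : ℝ≥0∞)⁻¹ := by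
  obtain ⟨⟨z, hz⟩, hle⟩ := hm
  calc ∑ h ∈ Finset.Ico A B, mass (triplePaths l s h)
      ≤ ∑ h ∈ insert m (Finset.Ico (1 + m) (B + m)), mass (triplePaths l s h) := by
        refine Finset.sum_le_sum_of_ne_zero fun h hh hne ↦ ?_
        have : m ≤ h := by
          by_contra! hlt
          exact hne (by rw [triplePaths_eq_empty (hz ▸ hlt), mass_empty])
        grind
    _ = mass (triplePaths l s m) + ∑ k ∈ Finset.Ico 1 B, mass (triplePaths l s (k + m)) := by
        rw [Finset.sum_insert (by simp), Finset.sum_Ico_add' (fun h ↦ mass (triplePaths l s h))]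
    _ ≤ 1 + ∑ k ∈ Finset.Ico 1 B, 640 * (k : ℝ≥0∞)⁻¹ := by
        refine add_le_add (mass_le_one_of_isAntichain isAntichain_triplePaths) ?_
        refine Finset.sum_le_sum fun k hk ↦ mass_triplePaths_add_le ?_ fun z ↦ hle ⟨z, rfl⟩
        have := (Finset.mem_Ico.mp hk).1
        lia
    _ = _ := by rw [Finset.mul_sum]

variable (l s A B) in
/-- The paths which complete a triple of maximal sites at a height in the window `[A, B)`. -/
def windowPaths : Set (List Bool) := ⋃ h ∈ Finset.Ico A B, triplePaths l s h

theorem sum_mass_triplePaths_le_mass_minimalPrefixes :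
    ∑ h ∈ Finset.Ico A B, mass (triplePaths l s h) ≤
      mass (minimalPrefixes (windowPaths l s A B)) *
        (1 + 640 * ∑ k ∈ Finset.Ico 1 B, (k : ℝ≥0∞)⁻¹) := by
  calc ∑ h ∈ Finset.Ico A B, mass (triplePaths l s h)
      ≤ ∑ h ∈ Finset.Ico A B, ∑' w : minimalPrefixes (windowPaths l s A B),
          weight w * mass {v | ↑w ++ v ∈ triplePaths l s h} :=
        Finset.sum_le_sum fun h hh ↦
          mass_le_tsum_minimalPrefixes (Set.subset_biUnion_of_mem hh)
    _ = ∑' w : minimalPrefixes (windowPaths l s A B),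
          weight w * ∑ h ∈ Finset.Ico A B, mass {v | ↑w ++ v ∈ triplePaths l s h} := by
        rw [← Summable.tsum_finsetSum fun _ _ ↦ ENNReal.summable]
        simp only [Finset.mul_sum]
    _ ≤ ∑' w : minimalPrefixes (windowPaths l s A B),
          weight w * (1 + 640 * ∑ k ∈ Finset.Ico 1 B, (k : ℝ≥0∞)⁻¹) := by
        refine ENNReal.tsum_le_tsum fun ⟨w, hw, _⟩ ↦ mul_le_mul' le_rfl ?_
        obtain ⟨h, -, hh⟩ := Set.mem_iUnion₂.mp hw
        simp only [append_mem_triplePaths, Set.ofPred_mem_eq]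
        refine sum_mass_triplePaths_le (m := h) ⟨⟨(profile s w).endpoint, hh.1 _ (by simp)⟩, ?_⟩
        rintro _ ⟨z, rfl⟩
        exact hh.apply_le z
    _ = _ := by rw [ENNReal.tsum_mul_right, mass]

theorem exists_le_sum_Ico_inv (A : ℕ) {x : ℝ≥0∞} (hx : x ≠ ∞) :
    ∃ B, A ≤ B ∧ x ≤ ∑ k ∈ Finset.Ico A B, (k : ℝ≥0∞)⁻¹ := by
  have hlim := (not_summable_iff_tendsto_nat_atTop_of_nonneg fun k : ℕ ↦ by positivity).mp
    Real.not_summable_natCast_inv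
  obtain ⟨B, hB, hAB⟩ := ((hlim.eventually_ge_atTop
    (x.toReal + ∑ k ∈ Finset.range A, (k : ℝ)⁻¹)).and (Filter.eventually_ge_atTop A)).exists
  refine ⟨B, hAB, ?_⟩
  calc x = ENNReal.ofReal x.toReal := (ENNReal.ofReal_toReal hx).symm
    _ ≤ ENNReal.ofReal (∑ k ∈ Finset.Ico A B, (k : ℝ)⁻¹) := by
        rw [Finset.sum_Ico_eq_sub _ hAB]
        exact ENNReal.ofReal_le_ofReal (by linarith)
    _ = ∑ k ∈ Finset.Ico A B, ENNReal.ofReal (k : ℝ)⁻¹ :=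
        ENNReal.ofReal_sum_of_nonneg fun k _ ↦ by positivity
    _ ≤ ∑ k ∈ Finset.Ico A B, (k : ℝ≥0∞)⁻¹ := by
        refine Finset.sum_le_sum fun k _ ↦ ?_
        rcases k.eq_zero_or_pos with rfl | hk
        · simp
        · rw [ENNReal.ofReal_inv_of_pos (by exact_mod_cast hk), ENNReal.ofReal_natCast]

theorem div_le_mass_minimalPrefixes {c : ℝ≥0∞} (hA : 0 < A) (hAB : A ≤ B)
    (hB : 1 + ∑ k ∈ Finset.Ico 1 A, (k : ℝ≥0∞)⁻¹ ≤ ∑ k ∈ Finset.Ico A B, (k : ℝ≥0∞)⁻¹)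
    (hlow : ∀ h ≥ A, c / h ≤ mass (triplePaths l s h)) :
    c / 1281 ≤ mass (minimalPrefixes (windowPaths l s A B)) := by
  set D := ∑ k ∈ Finset.Ico A B, (k : ℝ≥0∞)⁻¹
  set x := mass (minimalPrefixes (windowPaths l s A B))
  have hD0 : D ≠ 0 := (zero_lt_one.trans_le (le_self_add.trans hB)).ne'
  have hD : D ≠ ∞ := ENNReal.sum_ne_top.mpr <| by simp; lia
  refine ENNReal.div_le_of_le_mul ((ENNReal.mul_le_mul_iff_left hD0 hD).mp ?_)
  calc c * D = ∑ h ∈ Finset.Ico A B, c / h := by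
        simp only [D, Finset.mul_sum, div_eq_mul_inv]
    _ ≤ ∑ h ∈ Finset.Ico A B, mass (triplePaths l s h) :=
        Finset.sum_le_sum fun h hh ↦ hlow h (Finset.mem_Ico.mp hh).1
    _ ≤ x * (1 + 640 * ∑ k ∈ Finset.Ico 1 B, (k : ℝ≥0∞)⁻¹) :=
        sum_mass_triplePaths_le_mass_minimalPrefixes
    _ = x * (1 + 640 * (∑ k ∈ Finset.Ico 1 A, (k : ℝ≥0∞)⁻¹ + D)) := by
        rw [Finset.sum_Ico_consecutive _ hA hAB]
    _ ≤ x * (D + 640 * (D + D)) := by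
        gcongr
        · exact le_self_add.trans hB
        · exact le_add_self.trans hB
    _ = x * 1281 * D := by ring

end SecondMoment

theorem exists_le_mass_isAntichain_triplePaths : ∃ c : ℝ≥0∞, c ≠ 0 ∧
    ∀ (l : ℤ → ℕ) (s : ℤ), (Function.support l).Finite → ∀ H : ℕ,
      ∃ F ⊆ ⋃ h ∈ Set.Ici H, triplePaths l s h, IsAntichain (· <+: ·) F ∧ c ≤ mass F := by
  obtain ⟨c, hc, hlow⟩ := exists_div_le_mass_triplePaths
  refine ⟨ENNReal.ofReal c / 1281, by simp [hc], fun l s hl H ↦ ?_⟩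
  obtain ⟨h₀, hh₀⟩ := hlow l s hl
  set A := max H h₀ + 1
  have hA : 1 + ∑ k ∈ Finset.Ico 1 A, (k : ℝ≥0∞)⁻¹ ≠ ∞ :=
    ENNReal.add_ne_top.mpr ⟨ENNReal.one_ne_top, ENNReal.sum_ne_top.mpr <| by simp; lia⟩
  obtain ⟨B, hAB, hB⟩ := exists_le_sum_Ico_inv A hA
  refine ⟨minimalPrefixes (windowPaths l s A B), fun w hw ↦ ?_, isAntichain_minimalPrefixes _,
    div_le_mass_minimalPrefixes (by lia) hAB hB fun h hh ↦ ?_⟩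
  · obtain ⟨h, hh, hw⟩ := Set.mem_iUnion₂.mp hw.1
    have := (Finset.mem_Ico.mp hh).1
    exact Set.mem_iUnion₂.mpr ⟨h, Set.mem_Ici.mpr (by lia), hw⟩
  · have hh0 : (0 : ℝ) < h := by exact_mod_cast (by lia : 0 < h)
    simpa [ENNReal.ofReal_div_of_pos hh0] using hh₀ h (by lia)

/-! ### The coded walk -/

section Word

variable {x : ℕ → ℤ}

/-- The word of the first `n` steps of the walk with increments `x`. Every increment other than
`1` is read as a down step. -/
def word (x : ℕ → ℤ) (n : ℕ) : List Bool := (List.range n).map fun i ↦ decide (x i = 1)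

@[simp]
theorem length_word (x : ℕ → ℤ) (n : ℕ) : (word x n).length = n := by simp [word]

theorem word_succ (x : ℕ → ℤ) (n : ℕ) : word x (n + 1) = word x n ++ [decide (x n = 1)] := by
  simp [word, List.range_succ]

theorem take_word (x : ℕ → ℤ) {m n : ℕ} (h : m ≤ n) : (word x n).take m = word x m := by
  simp [word, ← List.map_take, List.take_range, h]

theorem word_isPrefix (x : ℕ → ℤ) {m n : ℕ} (h : m ≤ n) : word x m <+: word x n :=
  take_word x h ▸ List.take_prefix _ _

theorem word_eq_of_isPrefix {v : List Bool} {n : ℕ} (h : v <+: word x n) :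
    v = word x v.length := by
  have hle : v.length ≤ n := by simpa using h.length_le
  rw [← take_word x hle]
  exact List.prefix_iff_eq_take.mp h

theorem endpoint_profile_word (hx : ∀ i, x i = 1 ∨ x i = -1) (t : ℕ) :
    (profile 0 (word x t)).endpoint = ∑ i ∈ Finset.range t, x i := by
  induction t with
  | zero => rfl
  | succ t ih =>
    rw [Finset.sum_range_succ, ← ih, word_succ, endpoint_profile_append]
    rcases hx t with h | h <;> simp [profile, Profile.cons, step, h]

theorem visits_profile_word (hx : ∀ i, x i = 1 ∨ x i = -1) (t : ℕ) (z : ℤ) :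
    (profile 0 (word x t)).visits z =
      ((Finset.Icc 1 t).filter fun k ↦ ∑ i ∈ Finset.range k, x i = z).card := by
  induction t with
  | zero => rfl
  | succ t ih =>
    have hendpoint : (profile 0 (word x t)).endpoint + step (decide (x t = 1)) =
        ∑ i ∈ Finset.range (t + 1), x i := by
      simpa [word_succ, endpoint_profile_append, profile, Profile.cons] using
        endpoint_profile_word hx (t + 1)
    have hvisits : (profile 0 (word x (t + 1))).visits =
        (profile 0 (word x t)).visits + Pi.single (∑ i ∈ Finset.range (t + 1), x i) 1 := by
      ext z
      rw [word_succ, visits_profile_append, visits_profile_cons, hendpoint]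
      simp [profile, Profile.visits]
    rw [hvisits, Pi.add_apply, ih, ← Finset.insert_Icc_right_eq_Icc_add_one (by lia),
      Finset.filter_insert, Pi.single_apply]
    by_cases hz : ∑ i ∈ Finset.range (t + 1), x i = z
    · rw [if_pos hz, if_pos hz.symm, Finset.card_insert_of_notMem (by simp)]
    · rw [if_neg hz, if_neg (Ne.symm hz), add_zero]

theorem finite_support_visits_profile (s : ℤ) (w : List Bool) :
    (Function.support (profile s w).visits).Finite := by
  induction w generalizing s with
  | nil => simp [show (profile s []).visits = 0 from rfl]
  | cons c w ih =>
    rw [visits_profile_cons]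
    exact (((Set.finite_singleton _).subset Pi.support_single_subset).union (ih _)).subset
      (Function.support_add _ _)

theorem IsTopTriple.encard_setOf_forall_le {h : ℕ} {y : ℤ} {f : ℤ → ℕ} (hf : IsTopTriple h y f) :
    {y | ∀ z, f z ≤ f y}.encard = 3 := by
  have heq : {y | ∀ z, f z ≤ f y} = (Finset.Icc (y - 1) (y + 1) : Finset ℤ) := by
    ext x
    rw [Finset.coe_Icc]
    refine ⟨fun hx ↦ ?_, fun hx z ↦ hf.1 x hx ▸ hf.apply_le z⟩
    by_contra hxy
    exact ((hx y).trans_lt (hf.2 x hxy)).ne (hf.1 y (by simp))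
  rw [heq, Set.encard_coe_eq_coe_finsetCard, Int.card_Icc]
  ring_nf
  rfl

end Word

/-! ### Cylinders and almost sure occurrence -/

section Probability

variable {Ω : Type*} {ξ : ℕ → Ω → ℤ} {P F : Set (List Bool)} {w : List Bool}

/-- The event that the walk with increments `ξ` starts with the steps of `w`. -/
def cylinder (ξ : ℕ → Ω → ℤ) (w : List Bool) : Set Ω := {ω | word (ξ · ω) w.length = w}

theorem setOf_word_mem_eq_biUnion (ξ : ℕ → Ω → ℤ) (P : Set (List Bool)) (n : ℕ) :
    {ω | word (ξ · ω) n ∈ P} = ⋃ w ∈ {w ∈ P | w.length = n}, cylinder ξ w := by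
  ext ω
  simp only [Set.mem_iUnion, exists_prop]
  constructor
  · exact fun h ↦ ⟨word (ξ · ω) n, ⟨h, by simp⟩, by simp [cylinder]⟩
  · rintro ⟨w, ⟨hw, rfl⟩, hω : word (ξ · ω) w.length = w⟩
    rwa [Set.mem_ofPred_eq, hω]

theorem pairwiseDisjoint_cylinder (hF : IsAntichain (· <+: ·) F) :
    F.PairwiseDisjoint (cylinder ξ) := by
  intro v hv w hw hne
  refine Set.disjoint_left.mpr fun ω hωv hωw ↦ ?_
  rcases le_total v.length w.length with h | h
  · exact hF hv hw hne (hωv ▸ hωw ▸ word_isPrefix _ h)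
  · exact hF hw hv hne.symm (hωv ▸ hωw ▸ word_isPrefix _ h)

theorem isAntichain_setOf_length_eq (P : Set (List Bool)) (n : ℕ) :
    IsAntichain (· <+: ·) {w ∈ P | w.length = n} :=
  fun _ hv _ hw hne h ↦ hne (h.eq_of_length (hv.2.trans hw.2.symm))

theorem isAntichain_image_append (hF : IsAntichain (· <+: ·) F) (w : List Bool) :
    IsAntichain (· <+: ·) ((w ++ ·) '' F) := by
  rintro _ ⟨u, hu, rfl⟩ _ ⟨v, hv, rfl⟩ hne h
  exact hF hu hv (by rintro rfl; exact hne rfl) ((List.prefix_append_right_inj w).mp h)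

theorem cylinder_eq_biInter (ξ : ℕ → Ω → ℤ) (w : List Bool) :
    cylinder ξ w = ⋂ i ∈ Finset.range w.length, ξ i ⁻¹' (if w.getD i true then {1} else {1}ᶜ) := by
  ext ω
  simp only [cylinder, Set.mem_ofPred_eq, Set.mem_iInter, Finset.mem_range, Set.mem_preimage]
  refine ⟨fun h i hi ↦ ?_, fun h ↦ List.ext_getElem (length_word _ _) fun i _ hi ↦ ?_⟩
  · have hletter := List.getElem_of_eq h (by simpa using hi)
    rw [List.getD_eq_getElem _ _ hi, ← hletter]
    by_cases hx : ξ i ω = 1 <;> simp [word, hx]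
  · have hletter := h i hi
    rw [List.getD_eq_getElem _ _ hi] at hletter
    cases hb : w[i] <;> simpa [word, hb] using hletter

variable [MeasurableSpace Ω] {μ : Measure Ω} [IsProbabilityMeasure μ]

theorem measurableSet_cylinder (hξ : ∀ i, Measurable (ξ i)) (w : List Bool) :
    MeasurableSet (cylinder ξ w) := by
  rw [cylinder_eq_biInter]
  exact Finset.measurableSet_biInter _ fun i _ ↦ hξ i (.of_discrete)

theorem measure_cylinder (hξ : ∀ i, Measurable (ξ i)) (hindep : iIndepFun ξ μ)
    (hξ1 : ∀ i, μ {ω | ξ i ω = 1} = 1 / 2) (w : List Bool) : μ (cylinder ξ w) = weight w := by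
  have hletter (i : ℕ) (b : Bool) : μ (ξ i ⁻¹' (if b then {1} else {1}ᶜ)) = 2⁻¹ := by
    have h1 : μ (ξ i ⁻¹' {1}) = 2⁻¹ := (hξ1 i).trans (one_div 2)
    cases b
    · simp [prob_compl_eq_one_sub (hξ i .of_discrete), h1]
    · simpa using h1
  rw [cylinder_eq_biInter, hindep.measure_inter_preimage_eq_mul _ fun _ _ ↦ .of_discrete]
  simp [hletter, weight]

theorem measure_biUnion_cylinder (hξ : ∀ i, Measurable (ξ i)) (hindep : iIndepFun ξ μ)
    (hξ1 : ∀ i, μ {ω | ξ i ω = 1} = 1 / 2) (hF : IsAntichain (· <+: ·) F) :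
    μ (⋃ w ∈ F, cylinder ξ w) = mass F := by
  rw [measure_biUnion F.to_countable (pairwiseDisjoint_cylinder hF)
    fun w _ ↦ measurableSet_cylinder hξ w]
  simp only [measure_cylinder hξ hindep hξ1, mass]

theorem measurableSet_word_mem (hξ : ∀ i, Measurable (ξ i)) (P : Set (List Bool)) (n : ℕ) :
    MeasurableSet {ω | word (ξ · ω) n ∈ P} := by
  rw [setOf_word_mem_eq_biUnion]
  exact .biUnion (Set.to_countable _) fun w _ ↦ measurableSet_cylinder hξ w

theorem measurableSet_exists_word_mem (hξ : ∀ i, Measurable (ξ i)) (P : Set (List Bool)) :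
    MeasurableSet {ω | ∃ n, word (ξ · ω) n ∈ P} := by
  simp only [Set.ofPred_exists]
  exact .iUnion (measurableSet_word_mem hξ P)

theorem mul_measure_cylinder_le (hξ : ∀ i, Measurable (ξ i)) (hindep : iIndepFun ξ μ)
    (hξ1 : ∀ i, μ {ω | ξ i ω = 1} = 1 / 2) (hF : IsAntichain (· <+: ·) F)
    (hFP : ∀ v ∈ F, w ++ v ∈ P) :
    mass F * μ (cylinder ξ w) ≤ μ (cylinder ξ w ∩ {ω | ∃ n, word (ξ · ω) n ∈ P}) := by
  rw [measure_cylinder hξ hindep hξ1, mul_comm, ← mass_image_append,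
    ← measure_biUnion_cylinder hξ hindep hξ1 (isAntichain_image_append hF w)]
  refine measure_mono (Set.iUnion₂_subset ?_)
  rintro _ ⟨v, hv, rfl⟩ ω (hω : word (ξ · ω) (w ++ v).length = w ++ v)
  refine ⟨?_, (w ++ v).length, hω.symm ▸ hFP v hv⟩
  have hle : w.length ≤ (w ++ v).length := by simp
  change word (ξ · ω) w.length = w
  rw [← take_word _ hle, hω, List.take_left]

theorem mul_measure_word_mem_le (hξ : ∀ i, Measurable (ξ i)) (hindep : iIndepFun ξ μ)
    (hξ1 : ∀ i, μ {ω | ξ i ω = 1} = 1 / 2) {c : ℝ≥0∞}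
    (hP : ∀ w, ∃ F ⊆ {v | w ++ v ∈ P}, IsAntichain (· <+: ·) F ∧ c ≤ mass F)
    (Q : Set (List Bool)) (n : ℕ) :
    c * μ {ω | word (ξ · ω) n ∈ Q} ≤
      μ ({ω | word (ξ · ω) n ∈ Q} ∩ {ω | ∃ n, word (ξ · ω) n ∈ P}) := by
  set A : Set Ω := {ω | ∃ n, word (ξ · ω) n ∈ P}
  set R : Set (List Bool) := {w ∈ Q | w.length = n}
  have hA : MeasurableSet A := measurableSet_exists_word_mem hξ P
  have hdisj : R.PairwiseDisjoint (cylinder ξ) :=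
    pairwiseDisjoint_cylinder (isAntichain_setOf_length_eq Q n)
  have hmeas (w : List Bool) : MeasurableSet (cylinder ξ w) := measurableSet_cylinder hξ w
  rw [setOf_word_mem_eq_biUnion, Set.iUnion₂_inter,
    measure_biUnion R.to_countable hdisj fun w _ ↦ hmeas w,
    measure_biUnion R.to_countable (hdisj.mono fun _ ↦ Set.inter_subset_left)
      fun w _ ↦ (hmeas w).inter hA, ← ENNReal.tsum_mul_left]
  refine ENNReal.tsum_le_tsum fun w ↦ ?_
  obtain ⟨F, hFP, hF, hcF⟩ := hP w
  exact (mul_le_mul' hcF le_rfl).trans (mul_measure_cylinder_le hξ hindep hξ1 hF hFP)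

theorem ae_exists_word_mem (hξ : ∀ i, Measurable (ξ i)) (hindep : iIndepFun ξ μ)
    (hξ1 : ∀ i, μ {ω | ξ i ω = 1} = 1 / 2) {c : ℝ≥0∞} (hc : c ≠ 0)
    (hP : ∀ w, ∃ F ⊆ {v | w ++ v ∈ P}, IsAntichain (· <+: ·) F ∧ c ≤ mass F) :
    ∀ᵐ ω ∂μ, ∃ n, word (ξ · ω) n ∈ P := by
  set A : Set Ω := {ω | ∃ n, word (ξ · ω) n ∈ P}
  set Q : Set (List Bool) := {w | ∀ v ∈ P, ¬v <+: w}
  let N (n : ℕ) : Set Ω := {ω | word (ξ · ω) n ∈ Q}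
  have hN (n : ℕ) : MeasurableSet (N n) := measurableSet_word_mem hξ Q n
  have hA : MeasurableSet A := measurableSet_exists_word_mem hξ P
  have hanti : Antitone N := fun _ _ hmn _ hω v hv hpre ↦
    hω v hv (hpre.trans (word_isPrefix _ hmn))
  have hAc : Aᶜ = ⋂ n, N n := by
    ext ω
    simp only [A, N, Q, Set.mem_compl_iff, Set.mem_iInter, Set.mem_ofPred_eq, not_exists]
    refine ⟨fun h n v hv hpre ↦ h v.length ?_, fun h n hn ↦ h n _ hn List.prefix_rfl⟩
    rwa [← word_eq_of_isPrefix hpre]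
  have hlim : Filter.Tendsto (fun n ↦ μ (N n ∩ A)) Filter.atTop (nhds 0) := by
    have hempty : ⋂ n, (N n ∩ A) = ∅ := by
      rw [← Set.iInter_inter, ← hAc, Set.compl_inter_self]
    rw [← measure_empty (μ := μ), ← hempty]
    exact tendsto_measure_iInter_atTop (fun n ↦ ((hN n).inter hA).nullMeasurableSet)
      (fun _ _ h ↦ Set.inter_subset_inter_left A (hanti h)) ⟨0, measure_ne_top μ _⟩
  have hle (n : ℕ) : c * μ Aᶜ ≤ μ (N n ∩ A) :=
    (mul_le_mul' le_rfl (measure_mono (hAc ▸ Set.iInter_subset N n))).trans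
      (mul_measure_word_mem_le hξ hindep hξ1 hP Q n)
  have hzero : c * μ Aᶜ = 0 := nonpos_iff_eq_zero.mp (ge_of_tendsto' hlim hle)
  exact (mul_eq_zero.mp hzero).resolve_left hc

theorem ae_forall_exists_word_mem_triplePaths (hξ : ∀ i, Measurable (ξ i))
    (hindep : iIndepFun ξ μ) (hξ1 : ∀ i, μ {ω | ξ i ω = 1} = 1 / 2) :
    ∀ᵐ ω ∂μ, ∀ H, ∃ h ≥ H, ∃ n, word (ξ · ω) n ∈ triplePaths 0 0 h := by
  obtain ⟨c, hc, hmass⟩ := exists_le_mass_isAntichain_triplePaths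
  refine ae_all_iff.mpr fun H ↦ ?_
  have hP (w : List Bool) : ∃ F ⊆ {v | w ++ v ∈ ⋃ h ∈ Set.Ici H, triplePaths 0 0 h},
      IsAntichain (· <+: ·) F ∧ c ≤ mass F := by
    obtain ⟨F, hFP, hF⟩ := hmass (0 + (profile 0 w).visits) (profile 0 w).endpoint
      (by simpa using finite_support_visits_profile 0 w) H
    exact ⟨F, by simpa [Set.subset_def, append_mem_triplePaths] using hFP, hF⟩
  filter_upwards [ae_exists_word_mem hξ hindep hξ1 hc hP] with ω ⟨n, hn⟩
  obtain ⟨h, hh, hn⟩ := Set.mem_iUnion₂.mp hn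
  exact ⟨h, hh, n, hn⟩

theorem ae_forall_eq_one_or_eq_neg_one (hξ : ∀ i, Measurable (ξ i))
    (hξ1 : ∀ i, μ {ω | ξ i ω = 1} = 1 / 2) (hξ2 : ∀ i, μ {ω | ξ i ω = -1} = 1 / 2) :
    ∀ᵐ ω ∂μ, ∀ i, ξ i ω = 1 ∨ ξ i ω = -1 := by
  refine ae_all_iff.mpr fun i ↦ ?_
  have hmeas (a : ℤ) : MeasurableSet {ω | ξ i ω = a} := hξ i (measurableSet_singleton a)
  have hdisj : Disjoint {ω | ξ i ω = 1} {ω | ξ i ω = -1} :=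
    Set.disjoint_left.mpr fun ω (h1 : ξ i ω = 1) (h2 : ξ i ω = -1) ↦ by lia
  have hunion : μ ({ω | ξ i ω = 1} ∪ {ω | ξ i ω = -1}) = 1 := by
    rw [measure_union hdisj (hmeas _), hξ1, hξ2, ENNReal.add_halves]
  exact (prob_compl_eq_zero_iff ((hmeas _).union (hmeas _))).mpr hunion

end Probability

end FavoriteSites

open FavoriteSites

/-- For one-dimensional simple random walk, with probability 1 there are
infinitely many times `t` at which there are exactly three favorite sites. -/
theorem three_favorite_sites_infinitely_often
    {Ω : Type*} [MeasurableSpace Ω] (μ : Measure Ω) [IsProbabilityMeasure μ]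
    -- i.i.d. steps, each uniform on {−1, 1}
    (ξ : ℕ → Ω → ℤ) (hξmeas : ∀ i, Measurable (ξ i))
    (hξindep : iIndepFun ξ μ)
    (hξ1 : ∀ i, μ {ω | ξ i ω = 1} = 1 / 2)
    (hξ2 : ∀ i, μ {ω | ξ i ω = -1} = 1 / 2)
    -- the simple random walk
    (S : ℕ → Ω → ℤ) (hS : ∀ t ω, S t ω = ∑ i ∈ Finset.range t, ξ i ω)
    -- local times
    (L : ℕ → ℤ → Ω → ℕ)
    (hL : ∀ t x ω, L t x ω = ((Finset.Icc 1 t).filter fun k => S k ω = x).card)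
    -- favorite (most visited) sites
    (Fav : ℕ → Ω → Set ℤ)
    (hFav : ∀ t ω, Fav t ω = {y : ℤ | ∀ z : ℤ, L t z ω ≤ L t y ω}) :
    μ {ω | {t : ℕ | (Fav t ω).encard = 3}.Infinite} = 1 := by
  suffices h : ∀ᵐ ω ∂μ, {t : ℕ | (Fav t ω).encard = 3}.Infinite by
    rw [measure_congr (Filter.eventuallyEq_univ.mpr h), measure_univ]
  filter_upwards [ae_forall_eq_one_or_eq_neg_one hξmeas hξ1 hξ2,
    ae_forall_exists_word_mem_triplePaths hξmeas hξindep hξ1] with ω hstep htriple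
  refine Set.infinite_of_forall_exists_gt fun N ↦ ?_
  obtain ⟨h, hN, t, ht⟩ := htriple (N + 1)
  have hlocal : (0 + (profile 0 (word (ξ · ω) t)).visits) = (L t · ω) := by
    ext z
    simp [visits_profile_word hstep, hL, hS]
  have htop : IsTopTriple h (profile 0 (word (ξ · ω) t)).endpoint (L t · ω) := by
    rwa [← hlocal]
  refine ⟨t, by simpa only [Set.mem_ofPred_eq, hFav] using htop.encard_setOf_forall_le, ?_⟩
  calc N < h := hN
    _ = (profile 0 (word (ξ · ω) t)).visits (profile 0 (word (ξ · ω) t)).endpoint := by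
      rw [← htop.1 (profile 0 (word (ξ · ω) t)).endpoint (by simp), ← hlocal, zero_add]
    _ ≤ t := (visits_profile_le_length _ _ _).trans_eq (length_word _ _)
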